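/- arXiv:1506.05390 — 4 statements merged into one kernel-verified Lean document; each statement's English description precedes it below -/
import Mathlib

section
/- Let F be a finite extension of ℚ₂ of degree d = [F : ℚ₂]. Then the quotient group F^× / (F^×)² of the multiplicative group of F by its subgroup of squares is finite of order 2^(2+d). -/
section NormedPart

variable {F : Type*} [NormedField F] [IsUltrametricDist F]

lemma sqc_norm_sub_le_max (x y : F) : ‖x - y‖ ≤ max ‖x‖ ‖y‖ := by
  rw [sub_eq_add_neg, ← norm_neg y]
  exact IsUltrametricDist.norm_add_le_max x (-y)

/-- The closed ball around `0` of radius `‖c‖`, as an additive subgroup. -/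
def sqcBall (c : F) : AddSubgroup F where
  carrier := {x | ‖x‖ ≤ ‖c‖}
  zero_mem' := by simp
  add_mem' {x y} hx hy := (IsUltrametricDist.norm_add_le_max x y).trans (max_le hx hy)
  neg_mem' {x} hx := by simpa using hx

/-- The units of norm one that are congruent to one modulo the ball of radius `‖c‖`. -/
def sqcUnits (c : F) : Subgroup Fˣ where
  carrier := {u | ‖(u : F)‖ = 1 ∧ ‖(u : F) - 1‖ ≤ ‖c‖}
  one_mem' := by simp
  mul_mem' {u v} hu hv := by
    refine ⟨by simp [hu.1, hv.1], ?_⟩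
    have e : ((u * v : Fˣ) : F) - 1 = ((u : F) - 1) * v + ((v : F) - 1) := by push_cast; ring
    rw [e]
    refine (IsUltrametricDist.norm_add_le_max _ _).trans (max_le ?_ hv.2)
    rw [norm_mul, hv.1, mul_one]; exact hu.2
  inv_mem' {u} hu := by
    refine ⟨by simp [hu.1], ?_⟩
    have e : ((u⁻¹ : Fˣ) : F) - 1 = -((u : F) - 1) * (u⁻¹ : Fˣ) := by
      have := u.mul_inv
      linear_combination this
    rw [e, norm_mul, norm_neg]
    simpa [hu.1] using hu.2

lemma mem_sqcBall {c x : F} : x ∈ sqcBall c ↔ ‖x‖ ≤ ‖c‖ := Iff.rfl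

lemma mem_sqcUnits {c : F} {u : Fˣ} :
    u ∈ sqcUnits c ↔ ‖(u : F)‖ = 1 ∧ ‖(u : F) - 1‖ ≤ ‖c‖ := Iff.rfl

lemma mem_sqcUnits_one {u : Fˣ} : u ∈ sqcUnits (1 : F) ↔ ‖(u : F)‖ = 1 := by
  rw [mem_sqcUnits]
  refine ⟨And.left, fun h => ⟨h, ?_⟩⟩
  rw [norm_one]
  refine (sqc_norm_sub_le_max _ _).trans ?_
  simp [h]

lemma sqcNorm_of_close {x : F} (h : ‖x - 1‖ < 1) : ‖x‖ = 1 := by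
  apply le_antisymm
  · have : x = (x - 1) + 1 := by ring
    rw [this]
    refine (IsUltrametricDist.norm_add_le_max _ _).trans ?_
    simp [h.le]
  · by_contra! h1
    have : (1 : F) = x - (x - 1) := by ring
    have h2 : ‖(1 : F)‖ ≤ max ‖x‖ ‖x - 1‖ := by
      conv_lhs => rw [this]
      exact sqc_norm_sub_le_max _ _
    rw [norm_one] at h2
    exact absurd h2 (not_le.mpr (max_lt h1 h))

lemma sqcBall_mul (c x : F) (hc : c ≠ 0) :
    sqcBall (c * x) = (sqcBall x).map (AddMonoidHom.mulLeft c) := by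
  ext y
  simp only [AddSubgroup.mem_map, mem_sqcBall, AddMonoidHom.coe_mulLeft]
  constructor
  · intro h
    refine ⟨c⁻¹ * y, ?_, by field_simp⟩
    rw [norm_mul, norm_inv]
    rw [norm_mul] at h
    have : 0 < ‖c‖ := norm_pos_iff.mpr hc
    rw [inv_mul_le_iff₀ this]; exact h
  · rintro ⟨z, hz, rfl⟩
    rw [norm_mul, norm_mul]; gcongr

lemma sqcBall_relIndex_mul (c x y : F) (hc : c ≠ 0) :
    (sqcBall (c * x)).relIndex (sqcBall (c * y)) = (sqcBall x).relIndex (sqcBall y) := by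
  rw [sqcBall_mul c x hc, sqcBall_mul c y hc, AddSubgroup.relIndex_map_map_of_injective]
  exact mul_right_injective₀ hc

lemma sqcBall_mono {a b : F} (h : ‖a‖ ≤ ‖b‖) : sqcBall a ≤ sqcBall b := fun _ hx => le_trans hx h

lemma sqcUnits_mono {a b : F} (h : ‖a‖ ≤ ‖b‖) : sqcUnits a ≤ sqcUnits b :=
  fun _ hx => ⟨hx.1, hx.2.trans h⟩

/-- The comparison map between multiplicative and additive quotients. -/
noncomputable def sqcMap (a b : F) :
    (sqcUnits b ⧸ (sqcUnits a).subgroupOf (sqcUnits b)) →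
      (sqcBall b ⧸ (sqcBall a).addSubgroupOf (sqcBall b)) :=
  fun q => Quotient.liftOn' q
    (fun u => QuotientAddGroup.mk (⟨((u : Fˣ) : F) - 1, u.2.2⟩ : sqcBall b))
    (by
      intro u v h
      rw [QuotientGroup.leftRel_apply, Subgroup.mem_subgroupOf] at h
      rw [QuotientAddGroup.eq, AddSubgroup.mem_addSubgroupOf]
      have h2 := h.2
      have e : (((u⁻¹ * v : sqcUnits b) : Fˣ) : F) - 1
          = (((u : Fˣ)⁻¹ : Fˣ) : F) * (((v : Fˣ) : F) - ((u : Fˣ) : F)) := by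
        have := (u : Fˣ).inv_mul
        push_cast at this ⊢
        linear_combination this
      rw [e, norm_mul] at h2
      have hu := u.2.1
      rw [mem_sqcBall]
      simp only [Units.val_inv_eq_inv_val, norm_inv, hu, inv_one, one_mul] at h2
      convert h2 using 2
      push_cast
      ring)

lemma sqcMap_injective (a b : F) : Function.Injective (sqcMap a b) := by
  intro p q
  induction p using QuotientGroup.induction_on with | H u => ?_
  induction q using QuotientGroup.induction_on with | H v => ?_
  intro h
  change (QuotientAddGroup.mk (⟨((u : Fˣ) : F) - 1, u.2.2⟩ : sqcBall b) :
    (sqcBall b ⧸ (sqcBall a).addSubgroupOf (sqcBall b))) =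
    QuotientAddGroup.mk (⟨((v : Fˣ) : F) - 1, v.2.2⟩ : sqcBall b) at h
  rw [QuotientAddGroup.eq, AddSubgroup.mem_addSubgroupOf] at h
  rw [QuotientGroup.eq, Subgroup.mem_subgroupOf]
  refine ⟨(u⁻¹ * v).2.1, ?_⟩
  have e : (((u⁻¹ * v : sqcUnits b) : Fˣ) : F) - 1
      = (((u : Fˣ)⁻¹ : Fˣ) : F) * (((v : Fˣ) : F) - ((u : Fˣ) : F)) := by
    have := (u : Fˣ).inv_mul
    push_cast at this ⊢
    linear_combination this
  rw [e, norm_mul]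
  have hu := u.2.1
  rw [mem_sqcBall] at h
  simp only [Units.val_inv_eq_inv_val, norm_inv, hu, inv_one, one_mul]
  convert h using 2
  push_cast
  ring

lemma sqcMap_surjective (a b : F) (hb : ‖b‖ < 1) : Function.Surjective (sqcMap a b) := by
  intro p
  induction p using QuotientAddGroup.induction_on with | H x => ?_
  have hx : ‖((x : F) + 1) - 1‖ ≤ ‖b‖ := by
    rw [add_sub_cancel_right]; exact x.2
  have h1 : ‖(x : F) + 1‖ = 1 := sqcNorm_of_close (hx.trans_lt hb)
  have h0 : (x : F) + 1 ≠ 0 := by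
    rw [← norm_pos_iff, h1]; exact one_pos
  refine ⟨QuotientGroup.mk (⟨Units.mk0 _ h0, h1, hx⟩ : sqcUnits b), ?_⟩
  change (QuotientAddGroup.mk _ : (sqcBall b ⧸ (sqcBall a).addSubgroupOf (sqcBall b))) = _
  congr 1
  ext
  simp

lemma sqcUnits_relIndex (a b : F) (hb : ‖b‖ < 1) :
    (sqcUnits a).relIndex (sqcUnits b) = (sqcBall a).relIndex (sqcBall b) :=
  Nat.card_congr (Equiv.ofBijective _ ⟨sqcMap_injective a b, sqcMap_surjective a b hb⟩)

lemma sqcUnits_relIndex_ne_zero (a b : F) (h : (sqcBall a).relIndex (sqcBall b) ≠ 0) :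
    (sqcUnits a).relIndex (sqcUnits b) ≠ 0 := by
  have : Finite (sqcBall b ⧸ (sqcBall a).addSubgroupOf (sqcBall b)) :=
    Nat.finite_of_card_ne_zero h
  have := Finite.of_injective _ (sqcMap_injective a b)
  exact Nat.pos_iff_ne_zero.mp Nat.card_pos

/-- Hensel's lemma for `x + x ^ 2 = y`. -/
lemma sqc_hensel [CompleteSpace F] {c y : F} (hc : ‖c‖ < 1) (hy : ‖y‖ ≤ ‖c‖) :
    ∃ x : F, ‖x‖ ≤ ‖c‖ ∧ x + x ^ 2 = y := by
  have hmap : Set.MapsTo (fun x : F => y - x ^ 2) {x | ‖x‖ ≤ ‖c‖} {x | ‖x‖ ≤ ‖c‖} := by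
    intro x hx
    refine (sqc_norm_sub_le_max _ _).trans (max_le hy ?_)
    rw [Set.mem_ofPred_eq] at hx
    rw [norm_pow]
    nlinarith [norm_nonneg x]
  have hcl : IsComplete {x : F | ‖x‖ ≤ ‖c‖} :=
    (isClosed_le continuous_norm continuous_const).isComplete
  have hcon : ContractingWith ‖c‖₊ (hmap.restrict _ _ _) := by
    refine ⟨by exact_mod_cast hc, LipschitzWith.of_dist_le_mul ?_⟩
    rintro ⟨x, hx⟩ ⟨z, hz⟩
    rw [Set.mem_ofPred_eq] at hx hz
    change dist (y - x ^ 2) (y - z ^ 2) ≤ ‖c‖ * dist x z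
    rw [dist_eq_norm, dist_eq_norm]
    have e : (y - x ^ 2) - (y - z ^ 2) = (-(x + z)) * (x - z) := by ring
    rw [e, norm_mul, norm_neg]
    gcongr
    exact (IsUltrametricDist.norm_add_le_max _ _).trans (max_le hx hz)
  obtain ⟨x, hx, hfix, -⟩ := hcon.exists_fixedPoint' hcl hmap (x := 0) (by simp)
    (edist_ne_top _ _)
  refine ⟨x, hx, ?_⟩
  have : y - x ^ 2 = x := hfix
  linear_combination -this

lemma sqcUnits_map_sq [CompleteSpace F] (h2 : ‖(2 : F)‖ < 1) (h20 : (2 : F) ≠ 0) {c : F}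
    (hc : ‖c‖ < 1) :
    (sqcUnits (2 * c)).map (powMonoidHom 2) = sqcUnits (4 * c) := by
  have h2p : 0 < ‖(2 : F)‖ := norm_pos_iff.mpr h20
  have h4 : ‖(4 : F)‖ = ‖(2 : F)‖ * ‖(2 : F)‖ := by rw [← norm_mul]; norm_num
  ext u
  constructor
  · rintro ⟨v, hv, rfl⟩
    obtain ⟨hv1, hv2⟩ := hv
    refine ⟨by simp [hv1], ?_⟩
    set x : F := ((v : F) - 1) / 2 with hx
    have hxc : ‖x‖ ≤ ‖c‖ := by
      rw [hx, norm_div, div_le_iff₀ h2p, mul_comm]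
      rwa [norm_mul] at hv2
    have e : (((powMonoidHom 2 : Fˣ →* Fˣ) v : Fˣ) : F) - 1 = 4 * (x + x * x) := by
      rw [hx]; simp only [powMonoidHom_apply, Units.val_pow_eq_pow_val]; field_simp; ring
    rw [e, norm_mul, norm_mul]
    gcongr
    refine (IsUltrametricDist.norm_add_le_max _ _).trans (max_le hxc ?_)
    rw [norm_mul]
    nlinarith [norm_nonneg x]
  · rintro ⟨hu1, hu2⟩
    have hy : ‖((u : F) - 1) / 4‖ ≤ ‖c‖ := by
      rw [norm_div, div_le_iff₀ (by rw [h4]; positivity), mul_comm]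
      rwa [norm_mul] at hu2
    obtain ⟨x, hx, hxy⟩ := sqc_hensel hc hy
    have hv2 : ‖(1 + 2 * x) - 1‖ ≤ ‖2 * c‖ := by
      rw [add_sub_cancel_left, norm_mul, norm_mul]; gcongr
    have hv1 : ‖1 + 2 * x‖ = 1 := by
      apply sqcNorm_of_close (hv2.trans_lt _)
      rw [norm_mul]; nlinarith [norm_nonneg c]
    have hv0 : 1 + 2 * x ≠ 0 := by
      rw [← norm_pos_iff, hv1]; exact one_pos
    refine ⟨Units.mk0 _ hv0, ⟨hv1, hv2⟩, ?_⟩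
    ext
    simp only [powMonoidHom_apply, Units.val_pow_eq_pow_val, Units.val_mk0]
    have h40 : (4 : F) ≠ 0 := by
      rw [← norm_pos_iff, h4]; positivity
    have := (eq_div_iff h40).mp hxy
    linear_combination this

lemma sqc_ker (h20 : (2 : F) ≠ 0) {c : F} (hc : ‖c‖ < 1) :
    (sqcUnits (2 * c)).relIndex (powMonoidHom 2 : Fˣ →* Fˣ).ker = 2 := by
  rw [Subgroup.relIndex_eq_two_iff_exists_notMem_and]
  have h2p : 0 < ‖(2 : F)‖ := norm_pos_iff.mpr h20
  refine ⟨-1, by simp [MonoidHom.mem_ker], ?_, ?_⟩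
  · rintro ⟨-, h⟩
    have e : (((-1 : Fˣ) : F) - 1) = -2 := by push_cast; ring
    rw [e, norm_neg, norm_mul] at h
    nlinarith
  · intro b hb
    rw [MonoidHom.mem_ker, powMonoidHom_apply] at hb
    have h' : (b : F) ^ 2 = 1 := by
      rw [← Units.val_pow_eq_pow_val, hb, Units.val_one]
    rcases mul_self_eq_one_iff.mp ((pow_two (b : F)).symm.trans h') with h | h
    · right
      have : b = 1 := Units.ext h
      rw [this]; exact one_mem _
    · left
      have : b * -1 = 1 := by ext; simp [h]
      rw [this]; exact one_mem _

/-- Numerical core: index of the squares, given a uniformizer and the index of `2 O` in `O`. -/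
lemma sqc_index [CompleteSpace F] (h2 : ‖(2 : F)‖ < 1) (h20 : (2 : F) ≠ 0) {c : F}
    (hc : ‖c‖ < 1) (hc0 : c ≠ 0) (hmax : ∀ x : F, ‖x‖ < 1 → ‖x‖ ≤ ‖c‖) (d : ℕ)
    (hd : (sqcBall (2 : F)).relIndex (sqcBall 1) = 2 ^ d) :
    (powMonoidHom 2 : Fˣ →* Fˣ).range.index = 2 ^ (2 + d) := by
  set sq : Fˣ →* Fˣ := powMonoidHom 2 with hsq
  set U : Subgroup Fˣ := sqcUnits (1 : F) with hU
  have hcp : 0 < ‖c‖ := norm_pos_iff.mpr hc0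
  have h2p : 0 < ‖(2 : F)‖ := norm_pos_iff.mpr h20
  -- index of squares times units
  have step1 : (sq.range ⊔ U).index = 2 := by
    rw [Subgroup.index_eq_two_iff_exists_notMem_and]
    refine ⟨Units.mk0 c hc0, ?_, ?_⟩
    · intro h
      obtain ⟨y, ⟨g, rfl⟩, z, hz, hyz⟩ := Subgroup.mem_sup.mp h
      have hz1 := mem_sqcUnits_one.mp hz
      have : ‖(g : F)‖ ^ 2 = ‖c‖ := by
        have := congrArg (fun u : Fˣ => ‖(u : F)‖) hyz
        simpa [hsq, hz1] using this
      have hg1 : ‖(g : F)‖ < 1 := by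
        by_contra! h1
        nlinarith
      have := hmax _ hg1
      have hg0 : 0 < ‖(g : F)‖ := norm_pos_iff.mpr g.ne_zero
      nlinarith
    · intro b
      obtain ⟨n, hn1, hn2⟩ := exists_mem_Ico_zpow (x := ‖(b : F)‖)
        (norm_pos_iff.mpr b.ne_zero) ((one_lt_inv₀ hcp).mpr hc)
      have key : ‖(b : F)‖ * ‖c‖ ^ n = 1 := by
        have hcn : 0 < ‖c‖ ^ n := zpow_pos hcp n
        rw [inv_zpow] at hn1 hn2
        have a1 : 1 ≤ ‖(b : F)‖ * ‖c‖ ^ n := by rwa [inv_le_iff_one_le_mul₀ hcn] at hn1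
        rw [zpow_add_one₀ hcp.ne', lt_inv_comm₀ (norm_pos_iff.mpr b.ne_zero) (by positivity)] at hn2
        have hb0 : 0 < ‖(b : F)‖ := norm_pos_iff.mpr b.ne_zero
        by_contra hne
        have a2 : 1 < ‖(b : F)‖ * ‖c‖ ^ n := lt_of_le_of_ne a1 (Ne.symm hne)
        have a3 := hmax ((b : F) * c ^ n)⁻¹ (by
          rw [norm_inv, norm_mul, norm_zpow]; exact inv_lt_one_of_one_lt₀ a2)
        rw [norm_inv, norm_mul, norm_zpow, inv_le_iff_one_le_mul₀ (by positivity)] at a3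
        rw [lt_inv_comm₀ (by positivity) hb0, ← one_div, lt_div_iff₀ (by positivity)] at hn2
        nlinarith
      set π := Units.mk0 c hc0 with hπ
      have hmemU : b * π ^ n ∈ U := by
        rw [hU, mem_sqcUnits_one]; simpa [hπ] using key
      rcases Int.even_or_odd' n with ⟨k, rfl | rfl⟩
      · right
        refine Subgroup.mem_sup.mpr ⟨sq (π ^ (-k)), ⟨_, rfl⟩, _, hmemU, ?_⟩
        simp only [hsq, powMonoidHom_apply]
        rw [zpow_neg, inv_pow, ← zpow_natCast, ← zpow_mul, mul_comm k]
        push_cast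
        rw [mul_comm b, inv_mul_cancel_left]
      · left
        refine Subgroup.mem_sup.mpr ⟨sq (π ^ (-k)), ⟨_, rfl⟩, _, hmemU, ?_⟩
        simp only [hsq, powMonoidHom_apply]
        rw [zpow_neg, inv_pow, ← zpow_natCast, ← zpow_mul, mul_comm k, zpow_add_one]
        push_cast
        rw [mul_left_comm b, inv_mul_cancel_left]
  have step2 : sq.range ⊓ U = U.map sq := by
    ext u
    constructor
    · rintro ⟨⟨g, rfl⟩, hg⟩
      refine ⟨g, ?_, rfl⟩
      have := mem_sqcUnits_one.mp hg
      refine mem_sqcUnits_one.mpr ?_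
      simpa [hsq, pow_eq_one_iff_of_nonneg] using this
    · rintro ⟨g, hg, rfl⟩
      refine ⟨⟨g, rfl⟩, mem_sqcUnits_one.mpr ?_⟩
      simp [hsq, mem_sqcUnits_one.mp hg]
  have hUsq : U.map sq ≤ U := step2 ▸ inf_le_right
  set H : Subgroup Fˣ := sqcUnits (2 * c) with hH
  have hH2 : H.map sq = sqcUnits (4 * c) := sqcUnits_map_sq h2 h20 hc
  have h2c : ‖2 * c‖ < 1 := by rw [norm_mul]; nlinarith
  have hHU : H ≤ U := sqcUnits_mono (by rw [norm_one]; exact h2c.le)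
  have h42 : (4 : F) * c = (2 * c) * 2 := by ring
  have hHH : H.map sq ≤ H := by
    rw [hH2]; apply sqcUnits_mono
    rw [h42, norm_mul (2 * c)]; nlinarith [norm_nonneg (2 * c)]
  have step3 : (H.map sq).relIndex H = 2 ^ d := by
    rw [hH2, hH, sqcUnits_relIndex _ _ h2c, h42]
    conv_lhs => rw [← mul_one (2 * c), mul_assoc (2 * c), one_mul]
    rw [sqcBall_relIndex_mul _ _ _ (mul_ne_zero h20 hc0), hd]
  have hker : sq.ker ≤ U := by
    intro u hu
    have h' : u ^ 2 = 1 := hu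
    rw [hU, mem_sqcUnits_one]
    have := congrArg (fun u : Fˣ => ‖(u : F)‖) h'
    simpa [pow_eq_one_iff_of_nonneg] using this
  have hfin : H.relIndex U ≠ 0 := by
    apply sqcUnits_relIndex_ne_zero
    have h4 : (sqcBall (2 * 2 : F)).relIndex (sqcBall 1) ≠ 0 := by
      rw [← AddSubgroup.relIndex_mul_relIndex (sqcBall (2 * 2 : F)) (sqcBall (2 * 1 : F)) (sqcBall 1),
        sqcBall_relIndex_mul _ _ _ h20, mul_one, hd]
      · positivity
      · apply sqcBall_mono; rw [norm_mul, norm_mul, norm_one]; gcongr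
      · apply sqcBall_mono; rw [mul_one, norm_one]; exact h2.le
    refine fun h0 => h4 (AddSubgroup.relIndex_eq_zero_of_le_left (sqcBall_mono ?_) h0)
    rw [norm_mul, norm_mul]; gcongr; exact hmax _ h2
  have e1 : (H.map sq).relIndex H * H.relIndex U = (H.map sq).relIndex U :=
    Subgroup.relIndex_mul_relIndex _ _ _ hHH hHU
  have e2 : (H.map sq).relIndex (U.map sq) * (U.map sq).relIndex U = (H.map sq).relIndex U :=
    Subgroup.relIndex_mul_relIndex _ _ _ (Subgroup.map_mono hHU) hUsq
  rw [Subgroup.relIndex_map_map, sup_eq_left.mpr hker] at e2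
  have e3 : H.relIndex (H ⊔ sq.ker) * (H ⊔ sq.ker).relIndex U = H.relIndex U :=
    Subgroup.relIndex_mul_relIndex _ _ _ le_sup_left (sup_le hHU hker)
  rw [Subgroup.relIndex_sup_left, sqc_ker h20 hc] at e3
  have e4 : (U.map sq).relIndex U = 2 ^ d * 2 := by
    rw [← e1, step3, ← e3] at e2
    have hX : (H ⊔ sq.ker).relIndex U ≠ 0 := by
      intro h; rw [h] at e3; exact hfin e3.symm
    apply Nat.eq_of_mul_eq_mul_left (Nat.pos_of_ne_zero hX)
    rw [e2]; ring
  rw [← Subgroup.relIndex_mul_index (le_sup_left : sq.range ≤ sq.range ⊔ U), step1,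
    Subgroup.relIndex_sup_left, ← Subgroup.inf_relIndex_right, step2, e4]
  ring

lemma sqc_uniformizer [ProperSpace F] (h2 : ‖(2 : F)‖ < 1) (h20 : (2 : F) ≠ 0) :
    ∃ c : F, ‖c‖ < 1 ∧ c ≠ 0 ∧ ∀ x : F, ‖x‖ < 1 → ‖x‖ ≤ ‖c‖ := by
  have hcomp : IsCompact (Metric.ball (0 : F) 1) :=
    Metric.isCompact_of_isClosed_isBounded (IsUltrametricDist.isClosed_ball 0 1)
      Metric.isBounded_ball
  obtain ⟨c, hc, hmax⟩ := hcomp.exists_isMaxOn ⟨0, by simp⟩ continuous_norm.continuousOn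
  have hm : ∀ x : F, ‖x‖ < 1 → ‖x‖ ≤ ‖c‖ := fun x hx => hmax (by simpa using hx)
  refine ⟨c, by simpa using hc, ?_, hm⟩
  rw [← norm_pos_iff]
  exact (norm_pos_iff.mpr h20).trans_le (hm 2 h2)

end NormedPart

open Polynomial in
lemma sqc_integral_iff {F : Type*} [NormedField F] [NormedAlgebra ℚ_[2] F]
    [FiniteDimensional ℚ_[2] F] [Algebra ℤ_[2] F]
    [IsScalarTower ℤ_[2] ℚ_[2] F]
    (x : F) : IsIntegral ℤ_[2] x ↔ ‖x‖ ≤ 1 := by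
  rw [NormedAlgebra.norm_eq_spectralNorm ℚ_[2] x]
  have hx : IsIntegral ℚ_[2] x := Algebra.IsIntegral.isIntegral x
  have hm := minpoly.monic hx
  refine Iff.trans ?_ (spectralValue_le_one_iff hm).symm
  constructor
  · intro h n
    rw [minpoly.isIntegrallyClosed_eq_field_fractions' ℚ_[2] h, coeff_map]
    exact ((minpoly ℤ_[2] x).coeff n).2
  · intro h'
    have hl : minpoly ℚ_[2] x ∈ lifts (algebraMap ℤ_[2] ℚ_[2]) := by
      rw [lifts_iff_coeff_lifts]
      intro n
      exact ⟨⟨_, h' n⟩, rfl⟩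
    obtain ⟨q, hq, -, hqm⟩ := lifts_and_natDegree_eq_and_monic hl hm
    refine ⟨q, hqm, ?_⟩
    have := minpoly.aeval ℚ_[2] x
    rw [← hq, aeval_map_algebraMap] at this
    exact this

lemma sqc_norm_two {F : Type*} [NormedField F] [NormedAlgebra ℚ_[2] F] : ‖(2 : F)‖ = 2⁻¹ := by
  have h : (2 : F) = algebraMap ℚ_[2] F 2 := (map_ofNat _ 2).symm
  rw [h, norm_algebraMap']
  exact_mod_cast Padic.norm_p (p := 2)

lemma sqc_ball_index {F : Type*} [NormedField F] [IsUltrametricDist F] [NormedAlgebra ℚ_[2] F]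
    [FiniteDimensional ℚ_[2] F] :
    (sqcBall (2 : F)).relIndex (sqcBall 1) = 2 ^ Module.finrank ℚ_[2] F := by
  let : Algebra ℤ_[2] F := ((algebraMap ℚ_[2] F).comp (algebraMap ℤ_[2] ℚ_[2])).toAlgebra
  have : IsScalarTower ℤ_[2] ℚ_[2] F := IsScalarTower.of_algebraMap_eq fun _ => rfl
  have : CharZero ℚ_[2] := inferInstance
  have : Module.IsTorsionFree ℤ_[2] F := Module.IsTorsionFree.trans_faithfulSMul ℤ_[2] ℚ_[2] F
  let C := integralClosure ℤ_[2] F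
  have : Module.Free ℤ_[2] C := IsIntegralClosure.module_free ℤ_[2] ℚ_[2] F C
  have : Module.Finite ℤ_[2] C := IsIntegralClosure.finite ℤ_[2] ℚ_[2] F C
  have hrank : Module.finrank ℤ_[2] C = Module.finrank ℚ_[2] F :=
    IsIntegralClosure.rank ℤ_[2] ℚ_[2] F C
  let b := Module.finBasisOfFinrankEq ℤ_[2] C hrank
  let f : C →+ (Fin (Module.finrank ℚ_[2] F) → ZMod 2) :=
    { toFun := fun c i => PadicInt.toZMod (b.equivFun c i)
      map_zero' := by ext i; simp
      map_add' := fun x y => by ext i; simp }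
  have hf : Function.Surjective f := by
    intro v
    choose w hw using fun i => ZMod.ringHom_surjective (PadicInt.toZMod (p := 2)) (v i)
    refine ⟨b.equivFun.symm w, ?_⟩
    ext i
    change PadicInt.toZMod (b.equivFun (b.equivFun.symm w) i) = v i
    rw [LinearEquiv.apply_symm_apply, hw]
  let ι : C →+ F := C.val.toRingHom.toAddMonoidHom
  have hι : Function.Injective ι := Subtype.val_injective
  have h1 : (⊤ : AddSubgroup C).map ι = sqcBall (1 : F) := by
    ext x
    rw [mem_sqcBall, norm_one, ← sqc_integral_iff]
    constructor
    · rintro ⟨y, -, rfl⟩; exact y.2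
    · intro h; exact ⟨⟨x, h⟩, trivial, rfl⟩
  have h2 : f.ker = (⊤ : AddSubgroup C).map (AddMonoidHom.mulLeft (2 : C)) := by
    ext x
    constructor
    · intro hx
      have hx' : ∀ i, ∃ z : ℤ_[2], b.equivFun x i = 2 * z := by
        intro i
        have h : PadicInt.toZMod (b.equivFun x i) = 0 := congrFun hx i
        rw [← RingHom.mem_ker, PadicInt.ker_toZMod, PadicInt.maximalIdeal_eq_span_p,
          Ideal.mem_span_singleton] at h
        exact h
      choose z hz using hx'
      refine ⟨b.equivFun.symm z, trivial, ?_⟩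
      apply b.equivFun.injective
      have e : (AddMonoidHom.mulLeft (2 : C)) (b.equivFun.symm z)
          = (2 : ℤ_[2]) • b.equivFun.symm z := by
        rw [AddMonoidHom.coe_mulLeft, two_mul, two_smul]
      rw [e, map_smul, LinearEquiv.apply_symm_apply]
      ext i
      rw [hz i]; simp
    · rintro ⟨y, -, rfl⟩
      rw [AddMonoidHom.mem_ker, AddMonoidHom.coe_mulLeft, two_mul, map_add]
      ext i
      exact CharTwo.add_self_eq_zero (f y i)
  have h3 : f.ker.map ι = sqcBall (2 : F) := by
    have h20 : (2 : F) ≠ 0 := by rw [← norm_pos_iff, sqc_norm_two]; norm_num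
    rw [h2, ← mul_one (2 : F), sqcBall_mul _ _ h20, ← h1, AddSubgroup.map_map, AddSubgroup.map_map]
    congr 1
  rw [← h3, ← h1, AddSubgroup.relIndex_map_map_of_injective _ _ hι, AddSubgroup.relIndex_top_right,
    AddSubgroup.index_ker, AddMonoidHom.range_eq_top.mpr hf, AddSubgroup.card_top]
  simp

lemma sqc_main {F : Type*} [NormedField F] [NormedAlgebra ℚ_[2] F] [FiniteDimensional ℚ_[2] F] :
    (powMonoidHom 2 : Fˣ →* Fˣ).range.index = 2 ^ (2 + Module.finrank ℚ_[2] F) := by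
  have : IsUltrametricDist F := IsUltrametricDist.of_normedAlgebra ℚ_[2]
  have : ProperSpace F := FiniteDimensional.proper ℚ_[2] F
  have h2 : ‖(2 : F)‖ < 1 := by rw [sqc_norm_two]; norm_num
  have h20 : (2 : F) ≠ 0 := by rw [← norm_pos_iff, sqc_norm_two]; norm_num
  obtain ⟨c, hc, hc0, hmax⟩ := sqc_uniformizer h2 h20
  exact sqc_index h2 h20 hc hc0 hmax _ sqc_ball_index

/-- **Square classes of a 2-adic field.**
Let `F` be a finite extension of `ℚ₂` of degree `d = [F : ℚ₂]`.  Then the quotient group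
`F^× / (F^×)²` of the multiplicative group of `F` by its subgroup of squares is finite of
order `2 ^ (2 + d)`. -/
theorem square_classes_card_of_finite_extension_of_Q2
    (F : Type*) [Field F] [Algebra ℚ_[2] F] [FiniteDimensional ℚ_[2] F]
    (d : ℕ) (hd : d = Module.finrank ℚ_[2] F) :
    Finite (Fˣ ⧸ (powMonoidHom 2 : Fˣ →* Fˣ).range) ∧
      Nat.card (Fˣ ⧸ (powMonoidHom 2 : Fˣ →* Fˣ).range) = 2 ^ (2 + d) := by
  have key : (powMonoidHom 2 : Fˣ →* Fˣ).range.index = 2 ^ (2 + d) := by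
    rw [hd]
    let : NormedField F := spectralNorm.normedField ℚ_[2] F
    let : NormedAlgebra ℚ_[2] F := spectralNorm.normedAlgebra ℚ_[2] F
    exact sqc_main (F := F)
  exact ⟨Nat.finite_of_card_ne_zero (by
    change (powMonoidHom 2 : Fˣ →* Fˣ).range.index ≠ 0
    rw [key]; positivity), key⟩
end

section
/- Let F be a finite extension of ℚ₂ with ring of integers O_F, and let E|F be a quadratic field extension with ring of integers O_E which is ramified, i.e. π₀·O_E = m_E² where π₀ is a uniformizer of O_F and m_E is the maximal ideal of O_E. Then there exist a uniformizer Π of O_E and elements π₀, t ∈ O_F with π₀ a uniformizer of O_F, such that O_E = O_F[Π] (O_E is generated as an O_F-algebra by Π) and either (type R-P) Π² + π₀ = 0, or (type R-U) Π² − t·Π + π₀ = 0 where π₀ ∣ t and t ∣ 2 in O_F. -/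
set_option synthInstance.maxHeartbeats 1000000
set_option maxHeartbeats 2000000

section uniqueness

open Polynomial

theorem rq_root (y : ℤ_[2]) (m : ℕ) : ∃ z : ℤ_[2], z ^ (2 * m + 1) = 1 + 2 * y := by
  have h2 : ‖(2 : ℤ_[2])‖ < 1 := by
    have h3 := PadicInt.norm_p (p := 2)
    rw [Nat.cast_ofNat] at h3
    rw [h3]; norm_num
  have hodd : ‖((2 * m + 1 : ℕ) : ℤ_[2])‖ = 1 := by
    rw [PadicInt.norm_natCast_eq_one_iff]
    simp
  obtain ⟨z, hz, -⟩ := hensels_lemma (p := 2) (R := ℤ_[2])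
    (F := (X ^ (2 * m + 1) - C (1 + 2 * y) : Polynomial ℤ_[2])) (a := 1) (by
      simp only [map_sub, map_pow, aeval_X, aeval_C, one_pow, derivative_X_pow,
        derivative_C, sub_zero, map_mul, map_natCast, mul_one, hodd]
      simp
      have : ‖y‖ ≤ 1 := PadicInt.norm_le_one y
      exact lt_of_le_of_lt (mul_le_of_le_one_right (norm_nonneg _) this) h2)
  refine ⟨z, ?_⟩
  simp at hz
  linear_combination hz

theorem rq_withZero (a : WithZero (Multiplicative ℤ)) (ha : a ≠ 0)
    (h : ∀ m : ℕ, ∃ b : WithZero (Multiplicative ℤ), b ^ (2 * m + 1) = a) : a = 1 := by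
  obtain ⟨k, rfl⟩ : ∃ k : ℤ, a = WithZero.exp k := ⟨WithZero.log a, (WithZero.exp_log ha).symm⟩
  obtain ⟨b, hb⟩ := h k.natAbs
  have h1 := congrArg WithZero.log hb
  rw [WithZero.log_pow, WithZero.log_exp] at h1
  have hk : k = 0 := by
    by_contra hk
    have h2 : ((2 * k.natAbs + 1 : ℕ) : ℤ) ∣ k := ⟨b.log, by rw [← nsmul_eq_mul]; exact h1.symm⟩
    have h3 := Nat.le_of_dvd (by omega) (Int.natCast_dvd.1 h2)
    omega
  rw [hk]; rfl

/-- Ring homomorphisms from `ℤ₂` to a finite extension of `ℚ₂` are unique. -/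
theorem rq_unique (E : Type*) [Field E] [Algebra ℚ_[2] E] [FiniteDimensional ℚ_[2] E]
    [Algebra ℤ_[2] E] [IsScalarTower ℤ_[2] ℚ_[2] E] (f : ℤ_[2] →+* E) :
    f = algebraMap ℤ_[2] E := by
  have hD : IsDedekindDomain (integralClosure ℤ_[2] E) :=
    integralClosure.isDedekindDomain ℤ_[2] ℚ_[2] E
  have : CharZero E := charZero_of_injective_algebraMap (algebraMap ℚ_[2] E).injective
  have : IsFractionRing (integralClosure ℤ_[2] E) E :=
    integralClosure.isFractionRing_of_finite_extension ℚ_[2] E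
  have hinj : Function.Injective (algebraMap ℤ_[2] E) := by
    rw [IsScalarTower.algebraMap_eq ℤ_[2] ℚ_[2] E]
    exact (algebraMap ℚ_[2] E).injective.comp (IsFractionRing.injective ℤ_[2] ℚ_[2])
  have h2nu : ¬ IsUnit (2 : ℤ_[2]) := by
    have := (PadicInt.prime_p (p := 2)).not_isUnit
    simpa using this
  -- bounded image
  have hbd : ∀ y : ℤ_[2], ∃ b : integralClosure ℤ_[2] E, (b : E) = 2 * f y := by
    intro y
    have hu : (1 + 2 * y : ℤ_[2]) ≠ 0 := by
      intro h
      exact h2nu (IsUnit.of_mul_eq_one (-y) (by linear_combination -h))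
    have hu' : IsUnit (1 + 2 * y : ℤ_[2]) := by
      by_contra h
      have h1 : (2 * y) ∈ IsLocalRing.maximalIdeal ℤ_[2] :=
        Ideal.mul_mem_right _ _ h2nu
      have h3 := sub_mem (show (1 + 2 * y : ℤ_[2]) ∈ IsLocalRing.maximalIdeal ℤ_[2] from h) h1
      rw [add_sub_cancel_right] at h3
      exact h3 isUnit_one
    have hfu : f (1 + 2 * y) ≠ 0 := (hu'.map f).ne_zero
    obtain ⟨b, hb⟩ := IsDedekindDomain.HeightOneSpectrum.mem_integers_of_valuation_le_one
      (R := integralClosure ℤ_[2] E) E (f (1 + 2 * y)) (by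
        intro v
        apply le_of_eq
        apply rq_withZero _ ((Valuation.ne_zero_iff _).2 hfu)
        intro m
        obtain ⟨z, hz⟩ := rq_root y m
        exact ⟨v.valuation E (f z), by rw [← map_pow, ← map_pow, hz]⟩)
    refine ⟨b - 1, ?_⟩
    have hb' : (b : E) = f (1 + 2 * y) := hb
    push_cast
    rw [hb', map_add, map_mul, map_one, map_ofNat]
    ring
  have h2B : ¬ IsUnit (2 : integralClosure ℤ_[2] E) := by
    intro h
    apply h2nu
    have h' : IsUnit (algebraMap ℤ_[2] (integralClosure ℤ_[2] E) 2) := by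
      rw [map_ofNat]; exact h
    have hloc : IsLocalHom (algebraMap ℤ_[2] (integralClosure ℤ_[2] E)) :=
      (algebraMap_isIntegral_iff.2 inferInstance : (algebraMap ℤ_[2]
        (integralClosure ℤ_[2] E)).IsIntegral).isLocalHom
        (fun a b hab => hinj (congrArg Subtype.val hab))
    exact hloc.map_nonunit _ h'
  ext x
  obtain ⟨c, hc⟩ : ∃ c : integralClosure ℤ_[2] E, (c : E) = 2 * f x - 2 * algebraMap ℤ_[2] E x := by
    obtain ⟨b, hb⟩ := hbd x
    exact ⟨b - 2 * algebraMap ℤ_[2] _ x, by push_cast; rw [hb]; rfl⟩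
  have hmem : c ∈ (⨅ n : ℕ, Ideal.span {(2 : integralClosure ℤ_[2] E)} ^ n) := by
    rw [Ideal.mem_iInf]
    intro n
    rw [Ideal.span_singleton_pow, Ideal.mem_span_singleton]
    obtain ⟨y, hy⟩ : ∃ y, x - (x.appr n : ℤ_[2]) = 2 ^ n * y := by
      have := PadicInt.appr_spec n x
      rw [Ideal.mem_span_singleton] at this
      rw [Nat.cast_ofNat] at this
      exact this
    obtain ⟨b, hb⟩ := hbd y
    refine ⟨b - 2 * algebraMap ℤ_[2] _ y, Subtype.ext ?_⟩
    have h1 := congrArg f hy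
    have h2 := congrArg (algebraMap ℤ_[2] E) hy
    simp only [map_sub, map_mul, map_pow, map_natCast, map_ofNat] at h1 h2
    push_cast
    rw [hc, hb]
    change _ = 2 ^ n * (2 * f y - 2 * algebraMap ℤ_[2] E y)
    linear_combination 2 * h1 - 2 * h2
  rw [Ideal.iInf_pow_eq_bot_of_isDomain _ (by
    rw [Ne, Ideal.span_singleton_eq_top]; exact h2B), Ideal.mem_bot] at hmem
  rw [hmem] at hc
  have h2 : (2 : E) ≠ 0 := two_ne_zero
  apply mul_left_cancel₀ h2
  have hc' : (0 : E) = 2 * f x - 2 * algebraMap ℤ_[2] E x := hc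
  linear_combination -hc'

end uniqueness

section helpers

variable {A F E : Type*} [CommRing A] [IsDomain A] [IsLocalRing A] [Field F] [Algebra A F]
  [IsFractionRing A F] [Field E] [Algebra F E] [Algebra A E] [IsScalarTower A F E]
  [IsLocalRing (integralClosure A E)]

/-- Divisibility by a uniformizer of the top ring descends. -/
theorem rq_descend {p : A} {w : integralClosure A E}
    (hp : IsLocalRing.maximalIdeal A = Ideal.span {p})
    (hw : IsLocalRing.maximalIdeal (integralClosure A E) = Ideal.span {w})
    {a : A} (h : w ∣ algebraMap A (integralClosure A E) a) : p ∣ a := by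
  rw [← Ideal.mem_span_singleton, ← hp, IsLocalRing.mem_maximalIdeal, mem_nonunits_iff]
  intro hu
  have h1 := hu.map (algebraMap A (integralClosure A E))
  have h2 : algebraMap A (integralClosure A E) a ∈
      IsLocalRing.maximalIdeal (integralClosure A E) := by
    rw [hw, Ideal.mem_span_singleton]; exact h
  exact h2 h1

/-- If `p` divides `x + y w` then `p` divides `x` and `y`. -/
theorem rq_dvd_coeff {p : A} {w : integralClosure A E} (hw0 : w ≠ 0)
    (hp : IsLocalRing.maximalIdeal A = Ideal.span {p})
    (hw : IsLocalRing.maximalIdeal (integralClosure A E) = Ideal.span {w})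
    (hram : w ^ 2 ∣ algebraMap A (integralClosure A E) p)
    {x y : A} (h : w ^ 2 ∣ algebraMap A (integralClosure A E) x +
      algebraMap A (integralClosure A E) y * w) : p ∣ x ∧ p ∣ y := by
  have hx : p ∣ x := by
    apply rq_descend hp hw
    have h1 : w ∣ w ^ 2 := Dvd.intro_left (w ^ 1) (by ring)
    exact (dvd_add_left (Dvd.intro_left _ rfl)).1 (h1.trans h)
  refine ⟨hx, rq_descend hp hw ?_⟩
  have h2 := (dvd_add_right (hram.trans (map_dvd _ hx))).1 h
  rw [pow_two] at h2
  exact (mul_dvd_mul_iff_right hw0).1 h2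

/-- A uniformizer generates. -/
theorem rq_adjoin [IsDiscreteValuationRing A] [FiniteDimensional F E]
    (hdeg : Module.finrank F E = 2)
    {p : A} {w : integralClosure A E} (hw0 : w ≠ 0)
    (hp : IsLocalRing.maximalIdeal A = Ideal.span {p})
    (hw : IsLocalRing.maximalIdeal (integralClosure A E) = Ideal.span {w})
    (hram : w ^ 2 ∣ algebraMap A (integralClosure A E) p) :
    Algebra.adjoin A {w} = ⊤ := by
  have hirr : Irreducible p := (IsDiscreteValuationRing.irreducible_iff_uniformizer p).2 hp
  have hinjF : Function.Injective (algebraMap A F) := IsFractionRing.injective A F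
  have hinj : Function.Injective (algebraMap A (integralClosure A E)) := by
    intro a b hab
    have h1 : algebraMap A E a = algebraMap A E b := congrArg Subtype.val hab
    rw [IsScalarTower.algebraMap_apply A F E, IsScalarTower.algebraMap_apply A F E] at h1
    exact hinjF ((algebraMap F E).injective h1)
  have key : ∀ (k : ℕ) (b : integralClosure A E) (x y : A),
      algebraMap A (integralClosure A E) (p ^ k) * b = algebraMap A _ x + algebraMap A _ y * w →
      b ∈ Algebra.adjoin A {w} := by
    intro k
    induction k with
    | zero =>
      intro b x y h
      rw [pow_zero, map_one, one_mul] at h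
      rw [h]
      exact add_mem (Subalgebra.algebraMap_mem _ _)
        (mul_mem (Subalgebra.algebraMap_mem _ _) (Algebra.self_mem_adjoin_singleton A w))
    | succ k ih =>
      intro b x y h
      have hd : w ^ 2 ∣ algebraMap A (integralClosure A E) x +
          algebraMap A (integralClosure A E) y * w := by
        rw [← h, pow_succ p k, map_mul]
        exact ((hram.mul_left _).mul_right _)
      obtain ⟨⟨x', rfl⟩, ⟨y', rfl⟩⟩ := rq_dvd_coeff hw0 hp hw hram hd
      apply ih b x' y'
      have hp0 : algebraMap A (integralClosure A E) p ≠ 0 :=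
        (map_ne_zero_iff _ hinj).2 hirr.ne_zero
      apply mul_left_cancel₀ hp0
      simp only [map_mul, map_pow] at h ⊢
      linear_combination h
  -- linear independence
  have hli : LinearIndependent F ![(1 : E), (w : E)] := by
    rw [LinearIndependent.pair_iff' one_ne_zero]
    intro c hc
    rw [Algebra.smul_def, mul_one] at hc
    have hcint : IsIntegral A c := by
      have : IsIntegral A (algebraMap F E c) := by rw [hc]; exact w.2
      exact (isIntegral_algebraMap_iff (algebraMap F E).injective).1 this
    obtain ⟨a, rfl⟩ := IsIntegrallyClosed.isIntegral_iff.1 hcint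
    have haw : algebraMap A (integralClosure A E) a = w := by
      apply Subtype.ext
      rw [← hc, ← IsScalarTower.algebraMap_apply]; rfl
    have h1 : w ^ 2 ∣ algebraMap A (integralClosure A E) a +
        algebraMap A (integralClosure A E) 1 * (-w) := by
      rw [haw]; simp
    have h2 : p ∣ a := rq_descend hp hw (by rw [haw])
    have h3 : w ^ 2 ∣ w := by
      have := hram.trans (map_dvd (algebraMap A (integralClosure A E)) h2)
      rwa [haw] at this
    have h4 : w * w ∣ w * 1 := by rwa [mul_one, ← pow_two]
    have h5 := (mul_dvd_mul_iff_left hw0).1 h4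
    have h6 : w ∈ IsLocalRing.maximalIdeal (integralClosure A E) := by
      rw [hw]; exact Ideal.mem_span_singleton_self w
    exact h6 (isUnit_of_dvd_one h5)
  have hspan : Submodule.span F (Set.range ![(1 : E), (w : E)]) = ⊤ :=
    hli.span_eq_top_of_card_eq_finrank (by simp [hdeg])
  rw [eq_top_iff]
  intro b _
  have hb : (b : E) ∈ Submodule.span F (Set.range ![(1 : E), (w : E)]) := by
    rw [hspan]; trivial
  rw [Matrix.range_cons, Matrix.range_cons, Matrix.range_empty, Set.union_empty,
    Set.singleton_union, Submodule.mem_span_pair] at hb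
  obtain ⟨c, d, hcd⟩ := hb
  classical
  obtain ⟨s, hs⟩ := IsLocalization.exist_integer_multiples_of_finset (nonZeroDivisors A)
    ({c, d} : Finset F)
  obtain ⟨x, hx⟩ := hs c (by simp)
  obtain ⟨y, hy⟩ := hs d (by simp)
  have hs0 : (s : A) ≠ 0 := nonZeroDivisors.ne_zero s.2
  obtain ⟨k, u, hsu⟩ := IsDiscreteValuationRing.eq_unit_mul_pow_irreducible hs0 hirr
  apply key k b (↑u⁻¹ * x) (↑u⁻¹ * y)
  have hu : algebraMap A (integralClosure A E) ↑u * algebraMap A (integralClosure A E) ↑u⁻¹ = 1 := by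
    rw [← map_mul]; simp
  have hmain : algebraMap A (integralClosure A E) s * b =
      algebraMap A _ x + algebraMap A _ y * w := by
    apply Subtype.ext
    change algebraMap A E s * (b : E) = algebraMap A E x + algebraMap A E y * (w : E)
    rw [← hcd]
    simp only [IsScalarTower.algebraMap_apply A F E, hx, hy, Algebra.smul_def, map_mul]
    ring
  rw [hsu] at hmain
  simp only [map_mul] at hmain ⊢
  linear_combination (algebraMap A (integralClosure A E) ↑u⁻¹) * hmain -
    (algebraMap A (integralClosure A E) (p ^ k) * b) * hu

/-- Main abstract statement. -/
theorem rq_main [IsDiscreteValuationRing A] [FiniteDimensional F E]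
    (hdeg : Module.finrank F E = 2)
    (p : A) (w : integralClosure A E) (hw0 : w ≠ 0)
    (hp : IsLocalRing.maximalIdeal A = Ideal.span {p})
    (hw : IsLocalRing.maximalIdeal (integralClosure A E) = Ideal.span {w})
    (hram : w ^ 2 ∣ algebraMap A (integralClosure A E) p) :
    ∃ (ϖ : integralClosure A E) (π₀' t : A),
      IsLocalRing.maximalIdeal A = Ideal.span {π₀'} ∧
      IsLocalRing.maximalIdeal (integralClosure A E) = Ideal.span {ϖ} ∧
      Algebra.adjoin A {ϖ} = ⊤ ∧
      ((ϖ ^ 2 + algebraMap _ _ π₀' = 0) ∨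
        (ϖ ^ 2 - algebraMap _ _ t * ϖ + algebraMap _ _ π₀' = 0 ∧
          π₀' ∣ t ∧ t ∣ 2)) := by
  have hirr : Irreducible p := (IsDiscreteValuationRing.irreducible_iff_uniformizer p).2 hp
  have hadj := rq_adjoin (F := F) hdeg hw0 hp hw hram
  have hwn : ¬ IsUnit w := by
    have h6 : w ∈ IsLocalRing.maximalIdeal (integralClosure A E) := by
      rw [hw]; exact Ideal.mem_span_singleton_self w
    exact h6
  -- quadratic equation: via characteristic polynomial over F
  obtain ⟨t, n, heq⟩ : ∃ t n : A, w ^ 2 - algebraMap A _ t * w + algebraMap A _ n = 0 := by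
    have hint : IsIntegral A (w : E) := w.2
    have hn : IsIntegral A (Algebra.norm F (w : E)) := Algebra.isIntegral_norm F hint
    have ht : IsIntegral A (Algebra.trace F E (w : E)) := Algebra.isIntegral_trace hint
    obtain ⟨n, hn⟩ := IsIntegrallyClosed.isIntegral_iff.1 hn
    obtain ⟨t, ht⟩ := IsIntegrallyClosed.isIntegral_iff.1 ht
    refine ⟨t, n, Subtype.ext ?_⟩
    change (w : E) ^ 2 - algebraMap A E t * (w : E) + algebraMap A E n = 0
    rw [IsScalarTower.algebraMap_apply A F E, IsScalarTower.algebraMap_apply A F E, hn, ht]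
    let b := Module.finBasisOfFinrankEq F E hdeg
    rw [Algebra.norm_eq_matrix_det b, Algebra.trace_eq_matrix_trace b]
    have hc := Matrix.aeval_self_charpoly (Algebra.leftMulMatrix b (w : E))
    rw [Matrix.charpoly_fin_two] at hc
    apply Algebra.leftMulMatrix_injective b
    simp only [map_add, map_sub, map_mul, map_pow, AlgHom.commutes, map_zero]
    simpa using hc
  have hpn : p ∣ n := by
    apply rq_descend hp hw
    exact ⟨algebraMap A _ t - w, by linear_combination heq⟩
  have hpt : p ∣ t := by
    apply rq_descend hp hw
    have h1 : w ^ 2 ∣ algebraMap A (integralClosure A E) t * w := by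
      have h2 : algebraMap A (integralClosure A E) t * w = w ^ 2 + algebraMap A _ n := by
        linear_combination -heq
      rw [h2]
      exact dvd_add dvd_rfl (hram.trans (map_dvd _ hpn))
    rw [pow_two] at h1
    exact (mul_dvd_mul_iff_right hw0).1 h1
  have hnu : ∃ u : A, IsUnit u ∧ n = p * u := by
    obtain ⟨u, rfl⟩ := hpn
    refine ⟨u, ?_, rfl⟩
    by_contra hu
    have hpu : p ∣ u := by
      rw [← Ideal.mem_span_singleton, ← hp]; exact hu
    obtain ⟨v, rfl⟩ := hpu
    obtain ⟨s, rfl⟩ := hpt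
    obtain ⟨q, hq⟩ := hram
    apply hwn
    simp only [map_mul, hq] at heq
    have h0 : w ^ 2 * (w * (algebraMap A _ s * q - w * q * q * algebraMap A _ v)) = w ^ 2 * 1 := by
      linear_combination -heq
    exact IsUnit.of_mul_eq_one _ (mul_left_cancel₀ (pow_ne_zero 2 hw0) h0)
  obtain ⟨u, hu, rfl⟩ := hnu
  have hassoc : ∀ v : A, IsUnit v → IsLocalRing.maximalIdeal A = Ideal.span {p * v} := by
    intro v hv
    rw [hp, Ideal.span_singleton_mul_right_unit hv]
  by_cases h2 : t ∣ 2
  · exact ⟨w, p * u, t, hassoc u hu, hw, hadj, Or.inr ⟨heq, (hu.mul_right_dvd).2 hpt, h2⟩⟩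
  · obtain ⟨s, hs⟩ : (2 : A) ∣ t := (ValuationRing.dvd_total t 2).resolve_left h2
    have hsn : ¬ IsUnit s := by
      intro h
      apply h2
      rw [hs]
      exact (h.mul_right_dvd).2 dvd_rfl
    have hps : p ∣ s := by
      rw [← Ideal.mem_span_singleton, ← hp]; exact hsn
    obtain ⟨r, rfl⟩ := hps
    have hpnu : ¬ IsUnit p := hirr.not_isUnit
    have hu' : IsUnit (u - p * r ^ 2) := by
      by_contra h
      have h3 : p * r ^ 2 ∈ IsLocalRing.maximalIdeal A := by
        rw [hp, Ideal.mem_span_singleton]; exact Dvd.intro _ rfl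
      have h4 : u ∈ IsLocalRing.maximalIdeal A := by
        have := add_mem (show u - p * r ^ 2 ∈ IsLocalRing.maximalIdeal A from h) h3
        simpa using this
      exact h4 hu
    obtain ⟨q, hq⟩ := id hram
    have hv : IsUnit (1 - w * q * algebraMap A _ r) := by
      by_contra h
      have h3 : w * q * algebraMap A _ r ∈ IsLocalRing.maximalIdeal (integralClosure A E) := by
        rw [hw, Ideal.mem_span_singleton, mul_assoc]; exact Dvd.intro _ rfl
      have h4 := add_mem (show 1 - w * q * algebraMap A _ r ∈
        IsLocalRing.maximalIdeal (integralClosure A E) from h) h3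
      rw [sub_add_cancel] at h4
      exact h4 isUnit_one
    have hw' : w - algebraMap A _ (p * r) = w * (1 - w * q * algebraMap A _ r) := by
      rw [map_mul, hq]; ring
    have hmax : IsLocalRing.maximalIdeal (integralClosure A E) =
        Ideal.span {w - algebraMap A _ (p * r)} := by
      rw [hw', hw, Ideal.span_singleton_mul_right_unit hv]
    refine ⟨w - algebraMap A _ (p * r), p * (u - p * r ^ 2), 0, hassoc _ hu', hmax, ?_, Or.inl ?_⟩
    · apply rq_adjoin (F := F) hdeg _ hp hmax
      · rw [hw', mul_pow]
        exact ((hv.pow 2).mul_right_dvd).2 hram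
      · rw [hw']; exact mul_ne_zero hw0 hv.ne_zero
    · rw [hs] at heq
      simp only [map_mul, map_sub, map_pow, map_ofNat] at heq ⊢
      linear_combination heq

end helpers

/-- Version with an explicit embedding of the fraction field. -/
theorem rq_glue {A F E : Type*} [CommRing A] [IsDomain A] [IsDiscreteValuationRing A]
    [Field F] [CharZero F] [Algebra A F] [IsFractionRing A F] [Field E] [Algebra A E]
    [IsLocalRing (integralClosure A E)]
    (j : F →+* E) (hj : ∀ a : A, algebraMap A E a = j (algebraMap A F a))
    (hfin : @FiniteDimensional F E _ _ j.toAlgebra.toModule)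
    (hdeg : @Module.finrank F E _ _ j.toAlgebra.toModule = 2)
    (p : A) (hp : IsLocalRing.maximalIdeal A = Ideal.span {p})
    (hram : Ideal.span {algebraMap A (integralClosure A E) p}
      = (IsLocalRing.maximalIdeal (integralClosure A E)) ^ 2) :
    ∃ (ϖ : integralClosure A E) (π₀' t : A),
      IsLocalRing.maximalIdeal A = Ideal.span {π₀'} ∧
      IsLocalRing.maximalIdeal (integralClosure A E) = Ideal.span {ϖ} ∧
      Algebra.adjoin A {ϖ} = ⊤ ∧
      ((ϖ ^ 2 + algebraMap _ _ π₀' = 0) ∨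
        (ϖ ^ 2 - algebraMap _ _ t * ϖ + algebraMap _ _ π₀' = 0 ∧
          π₀' ∣ t ∧ t ∣ 2)) := by
  letI : Algebra F E := j.toAlgebra
  haveI : IsScalarTower A F E := IsScalarTower.of_algebraMap_eq hj
  haveI : FiniteDimensional F E := hfin
  have hdeg' : Module.finrank F E = 2 := hdeg
  have hB1 : IsDedekindDomain (integralClosure A E) :=
    integralClosure.isDedekindDomain A F E
  have hinjB : Function.Injective (algebraMap A (integralClosure A E)) := by
    intro a b hab
    have h1 : algebraMap A E a = algebraMap A E b := congrArg Subtype.val hab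
    rw [hj, hj] at h1
    exact IsFractionRing.injective A F (j.injective h1)
  have hBf : ¬ IsField (integralClosure A E) := fun h =>
    IsDiscreteValuationRing.not_isField A (isField_of_isIntegral_of_isField hinjB h)
  haveI : IsDiscreteValuationRing (integralClosure A E) :=
    ((IsDiscreteValuationRing.TFAE _ hBf).out 0 2).2 hB1
  obtain ⟨w, hwirr⟩ := IsDiscreteValuationRing.exists_irreducible (integralClosure A E)
  have hw := hwirr.maximalIdeal_eq
  rw [hw, Ideal.span_singleton_pow] at hram
  have hr1 := Ideal.span_singleton_le_span_singleton.1 hram.le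
  exact rq_main (F := F) hdeg' p w hwirr.ne_zero hp hw hr1

/-- Two towers over the same base have the same top degree. -/
theorem rq_dim {K F E : Type*} [Field K] [Field F] [Field E] [Algebra K F]
    [FiniteDimensional K F] [Algebra K E] [FiniteDimensional K E] [Algebra F E]
    [IsScalarTower K F E] :
    FiniteDimensional F E ∧
      Module.finrank K F * Module.finrank F E = Module.finrank K E :=
  ⟨FiniteDimensional.right K F E, Module.finrank_mul_finrank K F E⟩

/-- Any ring homomorphism from the integers of `F` to `E` comes from an embedding of `F` of the
same degree as the given one. -/
theorem rq_embed {A F E : Type*} [CommRing A] [IsDomain A] [Field F] [Algebra ℚ_[2] F]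
    [FiniteDimensional ℚ_[2] F] [Algebra ℤ_[2] F] [IsScalarTower ℤ_[2] ℚ_[2] F]
    [Algebra ℤ_[2] A] [Algebra.IsIntegral ℤ_[2] A] [Algebra A F] [IsScalarTower ℤ_[2] A F]
    [IsFractionRing A F] [Field E] [Algebra F E] [FiniteDimensional F E] (g : A →+* E) :
    ∃ j : F →+* E, (∀ a : A, g a = j (algebraMap A F a)) ∧
      @FiniteDimensional F E _ _ j.toAlgebra.toModule ∧
      @Module.finrank F E _ _ j.toAlgebra.toModule = Module.finrank F E := by
  letI : Algebra ℚ_[2] E := ((algebraMap F E).comp (algebraMap ℚ_[2] F)).toAlgebra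
  haveI : IsScalarTower ℚ_[2] F E := IsScalarTower.of_algebraMap_eq (fun _ => rfl)
  haveI : FiniteDimensional ℚ_[2] E := FiniteDimensional.trans ℚ_[2] F E
  letI : Algebra ℤ_[2] E := ((algebraMap ℚ_[2] E).comp (algebraMap ℤ_[2] ℚ_[2])).toAlgebra
  haveI : IsScalarTower ℤ_[2] ℚ_[2] E := IsScalarTower.of_algebraMap_eq (fun _ => rfl)
  have huniq := rq_unique E (g.comp (algebraMap ℤ_[2] A))
  have hinj : Function.Injective (algebraMap ℤ_[2] E) :=
    (algebraMap ℚ_[2] E).injective.comp (IsFractionRing.injective ℤ_[2] ℚ_[2])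
  have hg : Function.Injective g := by
    rw [RingHom.injective_iff_ker_eq_bot]
    apply Ideal.eq_bot_of_comap_eq_bot (R := ℤ_[2])
    rw [RingHom.comap_ker, huniq]
    exact (RingHom.injective_iff_ker_eq_bot _).1 hinj
  let j : F →+* E := IsFractionRing.lift hg
  have hj : ∀ a : A, g a = j (algebraMap A F a) := fun a =>
    (IsFractionRing.lift_algebraMap hg a).symm
  have hjQ : (algebraMap ℚ_[2] E) = j.comp (algebraMap ℚ_[2] F) := by
    apply IsLocalization.ringHom_ext (nonZeroDivisors ℤ_[2])
    ext x
    have h1 := RingHom.congr_fun huniq x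
    rw [RingHom.comp_apply, hj, ← IsScalarTower.algebraMap_apply ℤ_[2] A F] at h1
    rw [RingHom.comp_apply, RingHom.comp_apply, RingHom.comp_apply,
      ← IsScalarTower.algebraMap_apply ℤ_[2] ℚ_[2] F, h1]
    rfl
  have h1 := rq_dim (K := ℚ_[2]) (F := F) (E := E)
  have h2 := @rq_dim ℚ_[2] F E _ _ _ _ _ _ _ j.toAlgebra
    (@IsScalarTower.of_algebraMap_eq ℚ_[2] F E _ _ _ _ j.toAlgebra _ (RingHom.congr_fun hjQ))
  refine ⟨j, hj, h2.1, ?_⟩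
  have hpos : 0 < Module.finrank ℚ_[2] F := Module.finrank_pos
  exact Nat.eq_of_mul_eq_mul_left hpos (h2.2.trans h1.2.symm)

/-- **Classification of ramified quadratic extensions of a 2-adic field (R-P / R-U).**
Let `F` be a finite extension of `ℚ₂` with ring of integers `O_F` (the integral closure of
`ℤ₂` in `F`), and let `E|F` be a quadratic field extension with ring of integers `O_E`
(the integral closure of `O_F` in `E`) which is ramified, i.e. `π₀·O_E = m_E²` for a
uniformizer `π₀` of `O_F`, where `m_E` is the maximal ideal of `O_E`.  Then there exist a
uniformizer `Π` (written `ϖ` below) of `O_E` and elements `π₀', t ∈ O_F` with `π₀'` a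
uniformizer of `O_F`, such that `O_E = O_F[Π]` and either (type R-P) `Π² + π₀' = 0`, or
(type R-U) `Π² − t·Π + π₀' = 0` where `π₀' ∣ t` and `t ∣ 2` in `O_F`. -/
theorem ramified_quadratic_RP_or_RU
    (F : Type*) [Field F] [Algebra ℚ_[2] F] [FiniteDimensional ℚ_[2] F]
    [Algebra ℤ_[2] F] [IsScalarTower ℤ_[2] ℚ_[2] F]
    [IsLocalRing (integralClosure ℤ_[2] F)]
    (π₀ : integralClosure ℤ_[2] F)
    (hπ₀ : IsLocalRing.maximalIdeal (integralClosure ℤ_[2] F) = Ideal.span {π₀})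
    (E : Type*) [Field E] [Algebra F E] [FiniteDimensional F E]
    (hdeg : Module.finrank F E = 2)
    [Algebra (integralClosure ℤ_[2] F) E] [IsScalarTower (integralClosure ℤ_[2] F) F E]
    [IsLocalRing (integralClosure (integralClosure ℤ_[2] F) E)]
    (hram : Ideal.span {algebraMap (integralClosure ℤ_[2] F)
        (integralClosure (integralClosure ℤ_[2] F) E) π₀}
      = (IsLocalRing.maximalIdeal (integralClosure (integralClosure ℤ_[2] F) E)) ^ 2) :
    ∃ (ϖ : integralClosure (integralClosure ℤ_[2] F) E) (π₀' t : integralClosure ℤ_[2] F),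
      IsLocalRing.maximalIdeal (integralClosure ℤ_[2] F) = Ideal.span {π₀'} ∧
      IsLocalRing.maximalIdeal (integralClosure (integralClosure ℤ_[2] F) E)
        = Ideal.span {ϖ} ∧
      Algebra.adjoin (integralClosure ℤ_[2] F) {ϖ} = ⊤ ∧
      ((ϖ ^ 2 + algebraMap _ _ π₀' = 0) ∨
        (ϖ ^ 2 - algebraMap _ _ t * ϖ + algebraMap _ _ π₀' = 0 ∧
          π₀' ∣ t ∧ t ∣ 2)) := by
  haveI hA1 : IsDedekindDomain (integralClosure ℤ_[2] F) :=
    integralClosure.isDedekindDomain ℤ_[2] ℚ_[2] F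
  haveI : CharZero F := charZero_of_injective_algebraMap (algebraMap ℚ_[2] F).injective
  haveI : IsFractionRing (integralClosure ℤ_[2] F) F :=
    integralClosure.isFractionRing_of_finite_extension ℚ_[2] F
  have hinj : Function.Injective (algebraMap ℤ_[2] F) := by
    rw [IsScalarTower.algebraMap_eq ℤ_[2] ℚ_[2] F]
    exact (algebraMap ℚ_[2] F).injective.comp (IsFractionRing.injective ℤ_[2] ℚ_[2])
  have hinjA : Function.Injective (algebraMap ℤ_[2] (integralClosure ℤ_[2] F)) := by
    intro a b hab
    exact hinj (congrArg Subtype.val hab)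
  have hAf : ¬ IsField (integralClosure ℤ_[2] F) := fun h =>
    IsDiscreteValuationRing.not_isField ℤ_[2] (isField_of_isIntegral_of_isField hinjA h)
  haveI : IsDiscreteValuationRing (integralClosure ℤ_[2] F) :=
    ((IsDiscreteValuationRing.TFAE _ hAf).out 0 2).2 hA1
  obtain ⟨j, hj, hfin, hd⟩ := rq_embed (F := F)
    (algebraMap (integralClosure ℤ_[2] F) E)
  exact rq_glue j hj hfin (hd.trans hdeg) π₀ hπ₀ hram
end

section
/- Let B be a quaternion division algebra over F and let Π ∈ B satisfy Π² = −π₀·1. Let u ∈ O_F^× be a unit such that the polynomial X² − X − u has no root modulo π₀ (i.e. for every c ∈ O_F, π₀ does not divide c² − c − u). Then there exists γ ∈ B with γ² − γ = u·1 and Π·γ = (1 − γ)·Π; equivalently, the element δ = 2γ − 1 satisfies δ² = (1 + 4u)·1 and δ·Π = −Π·δ. (This realizes an embedding of the unramified quadratic extension F^(2) = F(δ) into B on which conjugation by Π acts as the nontrivial Galois automorphism.) -/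
open IsLocalRing

section RP
variable {R : Type*} [CommRing R] [IsDomain R] [IsLocalRing R] (p : R)

/-- Artin-Schreier index two in a finite field of characteristic two. -/
theorem rp_finite_AS (k : Type*) [Field k] [Finite k] (h2 : (2 : k) = 0) (a b : k)
    (ha : ∀ x : k, x ^ 2 - x ≠ a) (hb : ∀ x : k, x ^ 2 - x ≠ b) : ∃ x : k, x ^ 2 - x = a - b := by
  let f : k →+ k :=
    { toFun := fun x => x ^ 2 - x
      map_zero' := by simp
      map_add' := fun x y => by linear_combination (x * y) * h2 }
  have hker : Nat.card f.ker = 2 := by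
    have : (f.ker : Set k) = {0, 1} := by
      ext x
      simp only [SetLike.mem_coe, AddMonoidHom.mem_ker, Set.mem_insert_iff, Set.mem_singleton_iff]
      change x ^ 2 - x = 0 ↔ _
      rw [show x ^ 2 - x = x * (x - 1) by ring, mul_eq_zero, sub_eq_zero]
    have h3 : Nat.card (f.ker : Set k) = 2 := by
      rw [this, Nat.card_coe_set_eq]
      exact Set.ncard_pair zero_ne_one
    exact h3
  have hidx : f.range.index = 2 := by
    have h1 := f.range.card_mul_index
    have h2 := f.ker.card_mul_index
    rw [AddSubgroup.index_ker, hker] at h2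
    have h3 : 0 < Nat.card f.range := Nat.card_pos
    rw [← h2, mul_comm 2] at h1
    exact Nat.eq_of_mul_eq_mul_left h3 h1
  have h := (AddSubgroup.add_mem_iff_of_index_two hidx (a := a) (b := -b)).2
    (by
      constructor
      · rintro ⟨x, hx⟩; exact absurd hx (ha x)
      · intro hh
        obtain ⟨x, hx⟩ := (neg_mem_iff.1 hh)
        exact absurd hx (hb x))
  obtain ⟨x, hx⟩ := h
  exact ⟨x, by rw [sub_eq_add_neg a b]; exact hx⟩

theorem rp_res (hp : maximalIdeal R = Ideal.span {p}) (a b : R) : residue R a = residue R b ↔ p ∣ a - b := by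
  rw [← sub_eq_zero, ← map_sub, residue_eq_zero_iff, hp, Ideal.mem_span_singleton]

theorem rp_sqrt (hp : maximalIdeal R = Ideal.span {p}) [Finite (ResidueField R)] (h2 : p ∣ 2) (a : R) : ∃ d, p ∣ d ^ 2 - a := by
  have h20 : (2 : ResidueField R) = 0 := by
    have := (rp_res p hp 2 0).2 (by simpa using h2)
    rw [map_zero] at this
    rw [← this, map_ofNat]
  have hc : ringChar (ResidueField R) = 2 := by
    have : CharP (ResidueField R) 2 := CharTwo.of_one_ne_zero_of_two_eq_zero one_ne_zero h20
    exact ringChar.eq _ 2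
  obtain ⟨x, hx⟩ := FiniteField.isSquare_of_char_two hc (residue R a)
  obtain ⟨d, rfl⟩ := residue_surjective x
  refine ⟨d, (rp_res p hp _ _).1 ?_⟩
  rw [hx, map_pow, sq]

theorem rp_norm_approx (hp : maximalIdeal R = Ideal.span {p}) [Finite (ResidueField R)] (e : ℕ) (he : p ^ e ∣ 2) (he1 : 1 ≤ e) (b : R)
    (hb : IsUnit b) (k : ℕ) (hk : k + 1 ≤ 2 * e) :
    ∃ x y : R, p ^ (k + 1) ∣ b * (x ^ 2 + p * y ^ 2) - 1 := by
  have h2 : p ∣ 2 := (dvd_pow_self p (by omega)).trans he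
  induction k with
  | zero =>
    obtain ⟨v, hv⟩ := hb.exists_right_inv
    obtain ⟨d, t, hd⟩ := rp_sqrt p hp h2 v
    exact ⟨d, 0, b * t, by linear_combination b * hd + hv⟩
  | succ k ih =>
    obtain ⟨x, y, c, hc⟩ := ih (by omega)
    obtain ⟨d, t, hd⟩ := rp_sqrt p hp h2 (-c)
    rcases Nat.even_or_odd' (k + 1) with ⟨m, hm | hm⟩
    · obtain ⟨w, hw⟩ : p ^ (m + 1) ∣ 2 := (pow_dvd_pow p (by omega)).trans he
      obtain ⟨m, rfl⟩ : ∃ n, m = n + 1 := ⟨m - 1, by omega⟩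
      rw [hm] at hc ⊢
      refine ⟨x * (1 + p ^ (m + 1) * d), y * (1 + p ^ (m + 1) * d),
        t + w * d + c * p ^ m * (2 * d + p ^ (m + 1) * d ^ 2), ?_⟩
      linear_combination (1 + p ^ (m + 1) * d) ^ 2 * hc + p ^ (2 * (m+1)) * hd
        + p ^ (m + 1) * d * hw
    · rw [hm] at hc ⊢
      refine ⟨x - p * y * (p ^ m * d), x * (p ^ m * d) + y, t + p ^ (2 * m) * c * d ^ 2, ?_⟩
      linear_combination (1 + p * (p ^ m * d) ^ 2) * hc + p ^ (2 * m + 1) * hd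

theorem rp_main (hp : maximalIdeal R = Ideal.span {p}) [Finite (ResidueField R)] (e : ℕ) (he : Associated 2 (p ^ e)) (he1 : 1 ≤ e)
    (hH : ∀ c : R, (∃ r, p ∣ r ^ 2 - r - c) → ∃ r, r ^ 2 - r = c)
    (u : R) (hu : ∀ r, ¬ p ∣ r ^ 2 - r - u)
    (b : R) (hb : IsUnit b) :
    ∃ x y s : R, IsUnit s ∧ (b * (x ^ 2 + p * y ^ 2) = s ^ 2 ∨
      b * (x ^ 2 + p * y ^ 2) = (1 + 4 * u) * s ^ 2) := by
  have h2 : p ∣ 2 := (dvd_pow_self p (by omega)).trans he.symm.dvd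
  have hunit : ∀ t : R, IsUnit (1 + 2 * t) := by
    intro t
    by_contra h
    have h1 : 1 + 2 * t ∈ maximalIdeal R := (mem_maximalIdeal _).2 h
    rw [hp, Ideal.mem_span_singleton] at h1
    have h3 : p ∣ 1 := (dvd_add_left (h2.mul_right t)).1 h1
    have h4 : (1 : R) ∈ maximalIdeal R := by
      rw [hp, Ideal.mem_span_singleton]; exact h3
    exact (mem_maximalIdeal _).1 h4 isUnit_one
  obtain ⟨x, y, hxy⟩ := rp_norm_approx p hp e he.symm.dvd he1 b hb (2 * e - 1) (by omega)
  have h4 : (4 : R) ∣ b * (x ^ 2 + p * y ^ 2) - 1 := by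
    refine dvd_trans ?_ hxy
    rw [show 2 * e - 1 + 1 = e * 2 by omega, pow_mul, show (4 : R) = 2 ^ 2 by norm_num]
    exact pow_dvd_pow_of_dvd he.dvd 2
  obtain ⟨c, hc⟩ := h4
  have hs : ∀ r : R, IsUnit (2 * r - 1) := fun r => by
    rw [show 2 * r - 1 = -(1 + 2 * (-r)) by ring]; exact (hunit _).neg
  by_cases hr : ∃ r, p ∣ r ^ 2 - r - c
  · obtain ⟨r, hr⟩ := hH c hr
    exact ⟨x, y, 2 * r - 1, hs r, Or.inl (by linear_combination hc - 4 * hr)⟩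
  · obtain ⟨v, hv⟩ := (hunit (2 * u)).exists_right_inv
    have h20 : (2 : ResidueField R) = 0 := by
      have := (rp_res p hp 2 0).2 (by simpa using h2)
      rw [map_zero] at this
      rw [← this, map_ofNat]
    obtain ⟨z, hz⟩ := rp_finite_AS (ResidueField R) h20 (residue R c) (residue R u)
      (by
        intro z hz
        obtain ⟨r, rfl⟩ := residue_surjective z
        exact hr ⟨r, (rp_res p hp _ _).1 (by simpa using hz)⟩)
      (by
        intro z hz
        obtain ⟨r, rfl⟩ := residue_surjective z
        exact hu r ((rp_res p hp _ _).1 (by simpa using hz)))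
    obtain ⟨r, rfl⟩ := residue_surjective z
    have h5 : p ∣ (r ^ 2 - r) - (c - u) := (rp_res p hp _ _).1 (by simpa using hz)
    have h6 : p ∣ r ^ 2 - r - (c - u) * v := by
      have : r ^ 2 - r - (c - u) * v = (r ^ 2 - r) - (c - u) + 2 * (2 * u * v * (c - u)) := by
        linear_combination (-(c - u)) * hv
      rw [this]
      exact dvd_add h5 (h2.mul_right _)
    obtain ⟨r, hr⟩ := hH _ ⟨r, h6⟩
    refine ⟨x, y, 2 * r - 1, hs r, Or.inr ?_⟩
    linear_combination hc - 4 * (1 + 4 * u) * hr - 4 * (c - u) * hv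

theorem rp_hensel (e : ℕ) (he : p ^ e ∣ 2) (he' : 2 ∣ p ^ e) (he1 : 1 ≤ e)
    (hsep : ∀ x : R, (∀ n, p ^ n ∣ x) → x = 0)
    (hcompl : ∀ s : ℕ → R, (∀ n, 2 ^ n ∣ s (n + 1) - s n) → ∃ L, ∀ n, 2 ^ n ∣ s n - L)
    (c : R) (hc : ∃ r, p ∣ r ^ 2 - r - c) : ∃ r, r ^ 2 - r = c := by
  have h2 : p ∣ 2 := (dvd_pow_self p (by omega)).trans he
  obtain ⟨r, hr⟩ := hc
  let g : R → R := fun r => r ^ 2 - c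
  let s : ℕ → R := fun n => g^[n] r
  have hs0 : ∀ n, s (n + 1) = s n ^ 2 - c := fun n => Function.iterate_succ_apply' g n r
  have hs : ∀ n, p ^ (n + 1) ∣ s n ^ 2 - s n - c := by
    intro n
    induction n with
    | zero => simpa [s] using hr
    | succ n ih =>
      rw [hs0, show (s n ^ 2 - c) ^ 2 - (s n ^ 2 - c) - c
        = (s n ^ 2 - s n - c) * ((s n ^ 2 - s n - c) + 2 * s n) by ring, pow_succ]
      exact mul_dvd_mul ih (dvd_add ((dvd_pow_self p (by omega)).trans ih) (h2.mul_right _))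
  have hd : ∀ n, p ^ (n + 1) ∣ s (n + 1) - s n := fun n => by
    rw [hs0, show s n ^ 2 - c - s n = s n ^ 2 - s n - c by ring]; exact hs n
  have hd2 : ∀ n k, p ^ n ∣ s (n + k) - s n := by
    intro n k
    induction k with
    | zero => simp
    | succ k ih =>
      rw [show s (n + (k + 1)) - s n = (s (n + k + 1) - s (n + k)) + (s (n + k) - s n) by
        rw [← add_assoc]; ring]
      exact dvd_add ((pow_dvd_pow p (by omega)).trans (hd (n + k))) ih
  obtain ⟨L, hL⟩ := hcompl (fun n => s (e * n)) (fun n => by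
    refine dvd_trans ?_ (hd2 (e * n) e)
    rw [pow_mul]
    exact pow_dvd_pow_of_dvd he' n)
  refine ⟨L, ?_⟩
  rw [← sub_eq_zero]
  apply hsep
  intro n
  have h1 : p ^ n ∣ s (e * n) - L := by
    refine dvd_trans ?_ (hL n)
    exact pow_dvd_pow_of_dvd h2 n
  have h3 : p ^ n ∣ s (e * n) ^ 2 - s (e * n) - c :=
    (pow_dvd_pow p (by nlinarith)).trans (hs _)
  rw [show L ^ 2 - L - c = (s (e * n) ^ 2 - s (e * n) - c)
    - (s (e * n) - L) * (s (e * n) + L - 1) by ring]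
  exact dvd_sub h3 (h1.mul_right _)

end RP

theorem rp_complete (M : Type*) [CommRing M] [Algebra ℤ_[2] M] [Module.Finite ℤ_[2] M]
    [Module.Free ℤ_[2] M] (s : ℕ → M) (hs : ∀ n, (2 : M) ^ n ∣ s (n + 1) - s n) :
    ∃ L, ∀ n, (2 : M) ^ n ∣ s n - L := by
  let b := Module.Free.chooseBasis ℤ_[2] M
  have key : ∀ (n : ℕ) (x y : M), (2 : M) ^ n ∣ x - y ↔
      ∀ i, (2 : ℤ_[2]) ^ n ∣ b.repr x i - b.repr y i := by
    intro n x y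
    constructor
    · rintro ⟨z, hz⟩ i
      refine ⟨b.repr z i, ?_⟩
      have : x - y = (2 ^ n : ℤ_[2]) • z := by rw [hz, Algebra.smul_def, map_pow, map_ofNat]
      have := congrArg (fun t => b.repr t i) this
      simpa using this
    · intro h
      choose z hz using h
      refine ⟨∑ i, z i • b i, ?_⟩
      have : x - y = (2 ^ n : ℤ_[2]) • ∑ i, z i • b i := by
        apply b.ext_elem
        intro i
        rw [map_smul, map_sub, Finsupp.smul_apply, b.repr_sum_self, Finsupp.sub_apply, smul_eq_mul]
        exact hz i
      rw [this, Algebra.smul_def, map_pow, map_ofNat]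
  have hcoord : ∀ i, ∃ l : ℤ_[2], ∀ n, (2 : ℤ_[2]) ^ n ∣ b.repr (s n) i - l := by
    intro i
    have h1 : ∀ n k, (2 : ℤ_[2]) ^ n ∣ b.repr (s (n + k)) i - b.repr (s n) i := by
      intro n k
      induction k with
      | zero => simp
      | succ k ih =>
        have := dvd_add ((pow_dvd_pow 2 (Nat.le_add_right n k)).trans
          ((key _ _ _).1 (hs (n + k)) i)) ih
        simpa [add_assoc] using this
    have hI : maximalIdeal ℤ_[2] = Ideal.span {(2 : ℤ_[2])} := by
      simpa using PadicInt.maximalIdeal_eq_span_p (p := 2)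
    have hmem : ∀ n (x y : ℤ_[2]),
        x ≡ y [SMOD (maximalIdeal ℤ_[2] ^ n • ⊤ : Submodule ℤ_[2] ℤ_[2])] ↔ 2 ^ n ∣ x - y := by
      intro n x y
      rw [SModEq.sub_mem, hI, Ideal.span_singleton_pow, smul_eq_mul, Ideal.mul_top,
        Ideal.mem_span_singleton]
    obtain ⟨l, hl⟩ := IsPrecomplete.prec
      (inferInstance : IsPrecomplete (maximalIdeal ℤ_[2]) ℤ_[2])
      (f := fun n => b.repr (s n) i) (by
        intro m n hmn
        rw [hmem]
        obtain ⟨k, rfl⟩ := Nat.exists_eq_add_of_le hmn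
        rw [← dvd_neg, neg_sub]
        exact h1 m k)
    exact ⟨l, fun n => (hmem _ _ _).1 (hl n)⟩
  choose l hl using hcoord
  refine ⟨∑ i, l i • b i, fun n => (key _ _ _).2 fun i => ?_⟩
  rw [b.repr_sum_self]
  exact hl i n
set_option synthInstance.maxHeartbeats 1000000
set_option maxHeartbeats 2000000


theorem rp_quat (F B : Type*) [Field F] [CharZero F] [DivisionRing B] [Algebra F B]
    (hdim : Module.finrank F B = 4) (hcenter : Subalgebra.center F B = ⊥)
    (ϖ : B) (a : F) (hϖ : ϖ ^ 2 = algebraMap F B a) (hn : ∀ t : F, algebraMap F B t ≠ ϖ) :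
    ∃ (j : B) (b : F), j ≠ 0 ∧ j * ϖ = -(ϖ * j) ∧ j ^ 2 = algebraMap F B b := by
  have : CharZero B := charZero_of_injective_algebraMap (algebraMap F B).injective
  have hfin : FiniteDimensional F B := Module.finite_of_finrank_pos (by omega)
  have hcen : ∀ x : B, (∀ y, y * x = x * y) → ∃ t, algebraMap F B t = x := by
    intro x hx
    have : x ∈ Subalgebra.center F B := Subalgebra.mem_center_iff.2 hx
    rw [hcenter, Algebra.mem_bot] at this
    exact this
  have hc2 : ∀ y, y * ϖ ^ 2 = ϖ ^ 2 * y := fun y => by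
    rw [hϖ]; exact (Algebra.commutes a y).symm
  obtain ⟨y, hy⟩ : ∃ y, y * ϖ ≠ ϖ * y := by
    by_contra h
    push Not at h
    obtain ⟨t, ht⟩ := hcen ϖ h
    exact hn t ht
  obtain ⟨j, hj0, hj⟩ : ∃ j : B, j ≠ 0 ∧ j * ϖ = -(ϖ * j) := by
    refine ⟨y * ϖ - ϖ * y, sub_ne_zero.2 hy, ?_⟩
    have := hc2 y
    rw [sub_mul, mul_sub, mul_assoc, ← sq, this]
    noncomm_ring
  have hind : ∀ c d : F, c • (1 : B) + d • ϖ = 0 → c = 0 ∧ d = 0 := by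
    intro c d h
    have hd : d = 0 := by
      by_contra hd
      apply hn (-(d⁻¹ * c))
      have h1 : ϖ = d⁻¹ • (d • ϖ) := by rw [smul_smul, inv_mul_cancel₀ hd, one_smul]
      rw [h1, eq_neg_of_add_eq_zero_right h, Algebra.algebraMap_eq_smul_one, smul_neg, smul_smul,
        neg_smul]
    subst hd
    simp at h
    exact ⟨h, rfl⟩
  have hli : LinearIndependent F ![1, ϖ, j, ϖ * j] := by
    rw [Fintype.linearIndependent_iff]
    intro g hg
    rw [Fin.sum_univ_four] at hg
    simp only [Matrix.cons_val] at hg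
    set P := g 0 • (1 : B) + g 1 • ϖ with hP
    set Q := g 2 • (1 : B) + g 3 • ϖ with hQ
    have e1 : P + Q * j = 0 := by
      rw [← hg, hP, hQ, add_mul, smul_mul_assoc, smul_mul_assoc, one_mul]; abel
    have cP : P * ϖ = ϖ * P := by
      simp [hP, add_mul, mul_add]
    have cQ : Q * ϖ = ϖ * Q := by
      simp [hQ, add_mul, mul_add]
    have hϖ0 : ϖ ≠ 0 := fun h => hn 0 (by simp [h])
    have e2 : ϖ * (P - Q * j) = 0 := by
      have : (P + Q * j) * ϖ = 0 := by rw [e1, zero_mul]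
      rw [← this, add_mul P, mul_assoc Q, hj, cP, mul_sub, mul_neg, ← mul_assoc ϖ Q, ← mul_assoc Q, cQ]
      abel
    have e3 : P - Q * j = 0 := (mul_eq_zero.1 e2).resolve_left hϖ0
    have e4 : P = 0 := by
      have : (2 : B) * P = 0 := by
        rw [two_mul]
        calc P + P = (P + Q * j) + (P - Q * j) := by abel
          _ = 0 := by rw [e1, e3, add_zero]
      exact (mul_eq_zero.1 this).resolve_left two_ne_zero
    have e5 : Q = 0 := by
      rw [e4, zero_add] at e1
      exact (mul_eq_zero.1 e1).resolve_right hj0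
    obtain ⟨h0, h1⟩ := hind _ _ e4
    obtain ⟨h2, h3⟩ := hind _ _ e5
    intro i
    fin_cases i
    exacts [h0, h1, h2, h3]
  have hspan := hli.span_eq_top_of_card_eq_finrank (by simp [hdim])
  have hjj : ∀ x, x * j ^ 2 = j ^ 2 * x := by
    let S := Subalgebra.centralizer F {j ^ 2}
    have hϖj : ϖ * j ^ 2 = j ^ 2 * ϖ := by
      have h : ϖ * j = -(j * ϖ) := by rw [hj, neg_neg]
      rw [sq, ← mul_assoc, h, neg_mul, mul_assoc, h, mul_neg, neg_neg, mul_assoc]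
    have h1 : ϖ ∈ S := by
      simp only [S, Subalgebra.mem_centralizer_iff, Set.mem_singleton_iff, forall_eq]
      exact hϖj.symm
    have h2 : j ∈ S := by
      simp only [S, Subalgebra.mem_centralizer_iff, Set.mem_singleton_iff, forall_eq]
      rw [← pow_succ, ← pow_succ']
    have h3 : (⊤ : Submodule F B) ≤ Subalgebra.toSubmodule S := by
      rw [← hspan, Submodule.span_le]
      rintro _ ⟨i, rfl⟩
      fin_cases i
      exacts [S.one_mem, h1, h2, S.mul_mem h1 h2]
    intro x
    have h4 : x ∈ S := h3 (Submodule.mem_top (x := x))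
    simp only [S, Subalgebra.mem_centralizer_iff, Set.mem_singleton_iff, forall_eq] at h4
    exact h4.symm
  obtain ⟨b, hb⟩ := hcen _ hjj
  exact ⟨j, b, hj0, hj, hb.symm⟩

theorem rp_anti {F B : Type*} [Field F] [DivisionRing B] [Algebra F B]
    {ϖ j : B} {π b : F} (hϖ : ϖ ^ 2 = -algebraMap F B π) (hj : j * ϖ = -(ϖ * j))
    (hb : j ^ 2 = algebraMap F B b) (x y : F) :
    ((x • (1 : B) + y • ϖ) * j) * ϖ = -(ϖ * ((x • (1 : B) + y • ϖ) * j)) ∧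
    ((x • (1 : B) + y • ϖ) * j) ^ 2 = algebraMap F B (b * (x ^ 2 + π * y ^ 2)) := by
  constructor
  · rw [mul_assoc, hj]
    simp [add_mul, mul_add, mul_assoc]
  · have h1 : j * (x • (1 : B) + y • ϖ) = (x • (1 : B) - y • ϖ) * j := by
      simp [add_mul, mul_add, hj, sub_eq_add_neg]
    rw [sq, mul_assoc, ← mul_assoc j, h1, mul_assoc _ j j, ← sq, hb, ← mul_assoc]
    have h2 : (x • (1 : B) + y • ϖ) * (x • (1 : B) - y • ϖ) =
        algebraMap F B (x ^ 2 + π * y ^ 2) := by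
      have : (x • (1 : B) + y • ϖ) * (x • (1 : B) - y • ϖ) = (x ^ 2) • (1 : B) - (y ^ 2) • ϖ ^ 2 := by
        simp only [add_mul, mul_sub, smul_mul_smul_comm, one_mul, mul_one, sq, mul_comm y x]
        abel
      rw [this, hϖ]
      simp only [Algebra.algebraMap_eq_smul_one, smul_neg, sub_neg_eq_add, smul_smul, ← add_smul]
      congr 1; ring
    rw [h2, ← map_mul, mul_comm]

theorem rp_final {F B : Type*} [Field F] [CharZero F] [DivisionRing B] [Algebra F B]
    {ϖ δ : B} {u : F} (h : δ * ϖ = -(ϖ * δ)) (h2 : δ ^ 2 = algebraMap F B (1 + 4 * u)) :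
    ∃ γ : B,
      γ ^ 2 - γ = algebraMap F B u ∧
      ϖ * γ = (1 - γ) * ϖ ∧
      (2 * γ - 1) ^ 2 = algebraMap F B (1 + 4 * u) ∧
      (2 * γ - 1) * ϖ = - (ϖ * (2 * γ - 1)) := by
  have : CharZero B := charZero_of_injective_algebraMap (algebraMap F B).injective
  have hγ : 2 * ((1 / 2 : F) • (1 + δ)) - 1 = δ := by
    have : (2 : B) = algebraMap F B 2 := (map_ofNat (algebraMap F B) 2).symm
    rw [this, ← Algebra.smul_def, smul_smul]
    norm_num
  have e4 : (4 : B) ≠ 0 := by exact_mod_cast (by norm_num : (4 : ℕ) ≠ 0)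
  have e2 : (2 : B) ≠ 0 := two_ne_zero
  generalize (1 / 2 : F) • (1 + δ) = γ at hγ
  refine ⟨γ, ?_, ?_, by rw [hγ, h2], by rw [hγ, h]⟩
  · apply mul_left_cancel₀ e4
    have h3 : (2 * γ - 1) ^ 2 = 4 * (γ ^ 2 - γ) + 1 := by
      have : (2 * γ - 1) ^ 2 = 4 * (γ ^ 2 - γ) + 1 := by
        noncomm_ring
      exact this
    rw [hγ, h2] at h3
    rw [map_add, map_one, map_mul, map_ofNat, add_comm] at h3
    exact (add_right_cancel h3).symm
  · rw [← hγ] at h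
    apply mul_left_cancel₀ e2
    have : (2 * γ - 1) * ϖ = 2 * (γ * ϖ) - ϖ := by noncomm_ring
    rw [this] at h
    have h5 : ϖ * (2 * γ - 1) = 2 * (ϖ * γ) - ϖ := by noncomm_ring
    rw [h5] at h
    have h6 : 2 * (γ * ϖ) + 2 * (ϖ * γ) = 2 * ϖ := by
      rw [eq_add_of_sub_eq h, two_mul ϖ]; abel
    rw [sub_mul, one_mul, mul_sub, ← h6]; abel

/-- **Embedding the unramified quadratic extension into `B`, anticommuting with `Π`.**
Let `B` be a quaternion division algebra over `F` (a finite extension of `ℚ₂`), and let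
`Π ∈ B` (written `ϖ`) satisfy `Π² = −π₀·1` for a uniformizer `π₀` of `O_F`.  Let
`u ∈ O_F^×` be a unit such that `X² − X − u` has no root modulo `π₀`.  Then there exists
`γ ∈ B` with `γ² − γ = u·1` and `Π·γ = (1 − γ)·Π`; equivalently, `δ = 2γ − 1` satisfies
`δ² = (1 + 4u)·1` and `δ·Π = −Π·δ`.  (This realizes an embedding of the unramified
quadratic extension `F⁽²⁾ = F(δ)` into `B` on which conjugation by `Π` acts as the
nontrivial Galois automorphism.) -/
theorem exists_unramified_generator_anticommuting_RP
    (F : Type*) [Field F] [Algebra ℚ_[2] F] [FiniteDimensional ℚ_[2] F]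
    [Algebra ℤ_[2] F] [IsScalarTower ℤ_[2] ℚ_[2] F]
    [IsLocalRing (integralClosure ℤ_[2] F)]
    (π₀ : integralClosure ℤ_[2] F)
    (hπ₀ : IsLocalRing.maximalIdeal (integralClosure ℤ_[2] F) = Ideal.span {π₀})
    (B : Type*) [DivisionRing B] [Algebra F B]
    (hdim : Module.finrank F B = 4)
    (hcenter : Subalgebra.center F B = ⊥)
    (ϖ : B) (hϖ : ϖ ^ 2 = - algebraMap F B (π₀ : F))
    (u : integralClosure ℤ_[2] F) (hu : IsUnit u)
    (hnoroot : ∀ c : integralClosure ℤ_[2] F, ¬ (π₀ ∣ (c ^ 2 - c - u))) :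
    ∃ γ : B,
      γ ^ 2 - γ = algebraMap F B (u : F) ∧
      ϖ * γ = (1 - γ) * ϖ ∧
      (2 * γ - 1) ^ 2 = algebraMap F B (1 + 4 * (u : F)) ∧
      (2 * γ - 1) * ϖ = - (ϖ * (2 * γ - 1)) := by
  have : CharZero F := charZero_of_injective_algebraMap (algebraMap ℚ_[2] F).injective
  have : Module.Finite ℤ_[2] (integralClosure ℤ_[2] F) := IsIntegralClosure.finite ℤ_[2] ℚ_[2] F (integralClosure ℤ_[2] F)
  have : Module.IsTorsionFree ℤ_[2] F := by
    have : FaithfulSMul ℤ_[2] F := by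
      rw [faithfulSMul_iff_algebraMap_injective, IsScalarTower.algebraMap_eq ℤ_[2] ℚ_[2] F]
      exact (algebraMap ℚ_[2] F).injective.comp (IsFractionRing.injective ℤ_[2] ℚ_[2])
    infer_instance
  have : Module.Free ℤ_[2] (integralClosure ℤ_[2] F) := IsIntegralClosure.module_free ℤ_[2] ℚ_[2] F (integralClosure ℤ_[2] F)
  have : IsNoetherianRing (integralClosure ℤ_[2] F) := IsIntegralClosure.isNoetherianRing ℤ_[2] ℚ_[2] F _
  have : IsFractionRing (integralClosure ℤ_[2] F) F := integralClosure.isFractionRing_of_finite_extension ℚ_[2] F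
  have : Finite (ResidueField ℤ_[2]) := Finite.of_equiv _ PadicInt.residueField.symm.toEquiv
  have : IsLocalHom (algebraMap ℤ_[2] (integralClosure ℤ_[2] F)) := inferInstance
  have : Module.Finite (ResidueField ℤ_[2]) (ResidueField (integralClosure ℤ_[2] F)) := inferInstance
  have : Finite (ResidueField (integralClosure ℤ_[2] F)) := Module.finite_of_finite (ResidueField ℤ_[2])
  have h2m : (2 : (integralClosure ℤ_[2] F)) ∈ maximalIdeal (integralClosure ℤ_[2] F) := by
    rw [mem_maximalIdeal]
    intro h
    have h3 : IsUnit (2 : ℤ_[2]) := by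
      apply isUnit_of_map_unit (algebraMap ℤ_[2] (integralClosure ℤ_[2] F))
      rwa [map_ofNat]
    exact PadicInt.p_nonunit (p := 2) (by simpa using h3)
  have h20 : (2 : (integralClosure ℤ_[2] F)) ≠ 0 := two_ne_zero
  have hπ0 : π₀ ≠ 0 := by
    rintro rfl
    rw [hπ₀, Ideal.mem_span_singleton, zero_dvd_iff] at h2m
    exact h20 h2m
  have hnf : ¬ IsField (integralClosure ℤ_[2] F) := by
    rw [isField_iff_maximalIdeal_eq, hπ₀]
    simpa using hπ0
  have hdvr : IsDiscreteValuationRing (integralClosure ℤ_[2] F) :=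
    ((IsDiscreteValuationRing.TFAE (integralClosure ℤ_[2] F) hnf).out 0 4
      (a := IsDiscreteValuationRing (integralClosure ℤ_[2] F))
      (b := (maximalIdeal (integralClosure ℤ_[2] F)).IsPrincipal)).2 ⟨⟨π₀, hπ₀⟩⟩
  have hirr : Irreducible π₀ := (IsDiscreteValuationRing.irreducible_iff_uniformizer π₀).2 hπ₀
  obtain ⟨e, he⟩ := IsDiscreteValuationRing.associated_pow_irreducible h20 hirr
  have he1 : 1 ≤ e := by
    by_contra h
    obtain rfl : e = 0 := by omega
    rw [pow_zero, associated_one_iff_isUnit] at he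
    exact (mem_maximalIdeal _).1 h2m he
  have hsep : ∀ x : (integralClosure ℤ_[2] F), (∀ n, π₀ ^ n ∣ x) → x = 0 := by
    intro x hx
    by_contra hx0
    obtain ⟨n, hn⟩ := IsDiscreteValuationRing.associated_pow_irreducible hx0 hirr
    have h1 := (hx (n + 1)).trans hn.dvd
    rw [pow_dvd_pow_iff hπ0 hirr.not_isUnit] at h1
    omega
  have hH := rp_hensel π₀ e he.symm.dvd he.dvd he1 hsep (rp_complete (integralClosure ℤ_[2] F))
  have hmain := rp_main π₀ hπ₀ e he he1 hH u hnoroot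
  have hn : ∀ t : F, algebraMap F B t ≠ ϖ := by
    rintro t rfl
    rw [← map_pow, ← map_neg] at hϖ
    have ht := (algebraMap F B).injective hϖ
    have hti : IsIntegral ℤ_[2] t := by
      apply IsIntegral.of_pow (n := 2) two_pos
      rw [ht]
      exact π₀.2.neg
    have h1 : π₀ = (-⟨t, hti⟩ : (integralClosure ℤ_[2] F)) * ⟨t, hti⟩ := by
      apply Subtype.ext
      change (π₀ : F) = -t * t
      linear_combination ht
    have h2 : IsUnit (⟨t, hti⟩ : (integralClosure ℤ_[2] F)) := by
      rcases hirr.isUnit_or_isUnit h1 with h | h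
      · exact (IsUnit.neg_iff _).1 h
      · exact h
    apply hirr.not_isUnit
    rw [h1]
    exact h2.neg.mul h2
  have hϖ0 : ϖ ≠ 0 := fun h => hn 0 (by simp [h])
  have : CharZero B := charZero_of_injective_algebraMap (algebraMap F B).injective
  -- an anticommuting element with square a unit of `O`
  obtain ⟨j, b, hj0, hj, hjb⟩ : ∃ (j : B) (b : (integralClosure ℤ_[2] F)), IsUnit b ∧ j * ϖ = -(ϖ * j) ∧
      j ^ 2 = algebraMap F B (b : F) := by
    obtain ⟨j, b, hj0, hj, hjb⟩ := rp_quat F B hdim hcenter ϖ (-π₀) (by rw [hϖ, map_neg]) hn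
    have hb0 : b ≠ 0 := by
      rintro rfl
      rw [map_zero] at hjb
      exact hj0 (pow_eq_zero_iff two_ne_zero |>.1 hjb)
    obtain ⟨x, y, hy, rfl⟩ := IsFractionRing.div_surjective (A := (integralClosure ℤ_[2] F)) b
    have hy0 : y ≠ 0 := nonZeroDivisors.ne_zero hy
    have hyF : (y : F) ≠ 0 := fun h => hy0 (Subtype.ext h)
    have hx0 : x ≠ 0 := by
      rintro rfl
      simp at hb0
    have hπF : (π₀ : F) ≠ 0 := fun h => hπ0 (Subtype.ext h)
    -- clear the denominator
    obtain ⟨n, w, hw⟩ := IsDiscreteValuationRing.eq_unit_mul_pow_irreducible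
      (mul_ne_zero hx0 hy0) hirr
    have hwF : (x : F) * y = (w : (integralClosure ℤ_[2] F)) * (π₀ : F) ^ n := by
      have := congrArg (fun t : (integralClosure ℤ_[2] F) => (t : F)) hw
      simpa using this
    have hjb' : j ^ 2 = algebraMap F B ((x : F) / y) := hjb
    rcases Nat.even_or_odd' n with ⟨m, hm | hm⟩
    · obtain ⟨h1, h2⟩ := rp_anti hϖ hj hjb' ((y : F) / π₀ ^ m) 0
      refine ⟨_, w, w.isUnit, h1, h2.trans ?_⟩
      congr 1
      rw [hm] at hwF
      field_simp
      linear_combination y * hwF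
    · obtain ⟨h1, h2⟩ := rp_anti hϖ hj hjb' 0 ((y : F) / π₀ ^ (m + 1))
      refine ⟨_, w, w.isUnit, h1, h2.trans ?_⟩
      congr 1
      rw [hm] at hwF
      field_simp
      linear_combination π₀ * y * hwF
  obtain ⟨x, y, s, hs, hcase⟩ := hmain b hj0
  obtain ⟨h1, h2⟩ := rp_anti hϖ hj hjb (x : F) (y : F)
  have hs0 : (s : F) ≠ 0 := fun h => hs.ne_zero (Subtype.ext h)
  rcases hcase with h | h
  · exfalso
    have hF : (b : F) * ((x : F) ^ 2 + π₀ * (y : F) ^ 2) = (s : F) ^ 2 := by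
      have := congrArg (fun t : (integralClosure ℤ_[2] F) => (t : F)) h
      simpa using this
    rw [hF] at h2
    generalize (((x : F) • (1 : B) + (y : F) • ϖ) * j) = J at h1 h2
    rw [map_pow] at h2
    have hc : Commute J (algebraMap F B (s : F)) := (Algebra.commutes _ _).symm
    have hJ : J * ϖ = ϖ * J := by
      rcases hc.sq_eq_sq_iff_eq_or_eq_neg.1 h2 with h | h
      · rw [h]; exact Algebra.commutes _ _
      · rw [h, neg_mul, mul_neg]; rw [Algebra.commutes]
    rw [hJ] at h1
    have h3 : ϖ * J = 0 := self_eq_neg.1 h1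
    have h4 : J = 0 := (mul_eq_zero.1 h3).resolve_left hϖ0
    rw [h4] at h2
    have : algebraMap F B (s : F) = 0 := by
      refine pow_eq_zero_iff (two_ne_zero) |>.1 ?_
      rw [← h2]; simp
    exact hs0 ((map_eq_zero _).1 this)
  · have hF : (b : F) * ((x : F) ^ 2 + π₀ * (y : F) ^ 2) = (1 + 4 * (u : F)) * (s : F) ^ 2 := by
      have := congrArg (fun t : (integralClosure ℤ_[2] F) => (t : F)) h
      have h4 : (((4 : integralClosure ℤ_[2] F)) : F) = 4 := rfl
      simpa [h4] using this
    obtain ⟨h3, h4⟩ := rp_anti hϖ h1 h2 ((s : F)⁻¹) 0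
    refine rp_final h3 (h4.trans ?_)
    congr 1
    rw [hF]
    field_simp
    ring
end

section
/- Let t, π₀ ∈ O_F with π₀ a uniformizer, π₀ ∣ t and t ∣ 2 (data of an (R-U) extension), let B be a quaternion division algebra over F, and let ϑ ∈ B satisfy ϑ² = (1 − 4π₀/t²)·1 (note 1 − 4π₀/t² ∈ O_F^×). Let u ∈ O_F^× be a unit such that X² − X − u has no root modulo π₀. Then there exists ϑ̃ ∈ B with ϑ·ϑ̃ = −ϑ̃·ϑ and ϑ̃² = (1 + (t²/π₀)·u)·1; moreover, for any such ϑ̃ the element γ = (1 + ϑ + ϑ̃ + ϑ·ϑ̃)/2 ∈ B satisfies γ² − γ = u·1, so that conjugation data for an unramified quadratic subfield of B is obtained. -/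
set_option synthInstance.maxHeartbeats 1000000
set_option maxHeartbeats 2000000

section RUhelpers
open IsLocalRing

theorem RU_compact (R : Type*) [CommRing R] [IsLocalRing R] [IsNoetherianRing R] [IsDomain R]
    [Algebra ℤ_[2] R] [Module.Finite ℤ_[2] R] [Module.Free ℤ_[2] R] (π : R)
    (hπ : maximalIdeal R = Ideal.span {π}) (h2 : π ∣ 2) :
    Finite (ResidueField R) ∧
    ∀ s y : R, π ∣ y ^ 2 + y - s → ∃ z : R, z ^ 2 + z = s := by
  let : TopologicalSpace R := moduleTopology ℤ_[2] R
  have : IsModuleTopology ℤ_[2] R := ⟨rfl⟩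
  have : IsTopologicalRing R := IsModuleTopology.isTopologicalRing ℤ_[2] R
  let b := Module.Free.chooseBasis ℤ_[2] R
  have hc1 : Continuous b.equivFun :=
    IsModuleTopology.continuous_of_linearMap b.equivFun.toLinearMap
  have hc2 : Continuous b.equivFun.symm :=
    IsModuleTopology.continuous_of_linearMap b.equivFun.symm.toLinearMap
  let e : R ≃ₜ (Module.Free.ChooseBasisIndex ℤ_[2] R → ℤ_[2]) :=
    { toEquiv := b.equivFun.toEquiv
      continuous_toFun := hc1
      continuous_invFun := hc2 }
  have : CompactSpace R := e.symm.compactSpace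
  have : T2Space R := e.symm.t2Space
  refine ⟨inferInstance, fun s y hy => ?_⟩
  -- approximate roots
  have happ : ∀ n : ℕ, ∃ y : R, π ^ (n + 1) ∣ y ^ 2 + y - s := by
    intro n
    induction n with
    | zero => exact ⟨y, by simpa using hy⟩
    | succ n ih =>
      obtain ⟨y, c, hc⟩ := ih
      obtain ⟨k, hk⟩ := h2
      refine ⟨s - y ^ 2, ?_⟩
      -- new value is the defect times something
      have : (s - y ^ 2) ^ 2 + (s - y ^ 2) - s
          = π ^ (n + 1 + 1) * (c * (π ^ n * c - k * y)) := by
        have h : s = y ^ 2 + y - π ^ (n + 1) * c := by rw [← hc]; ring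
        have : (s - y ^ 2) ^ 2 + (s - y ^ 2) - s
          = π ^ (n + 1) * c * (π ^ (n + 1) * c - 2 * y) := by rw [h]; ring
        rw [this, hk]; ring
      exact ⟨_, this⟩
  have hcl : ∀ n, IsClosed {y : R | y ^ 2 + y - s ∈ maximalIdeal R ^ n} := by
    intro n
    have : IsClosed ((maximalIdeal R ^ n : Ideal R) : Set R) :=
      (Ideal.isCompact_of_fg (IsNoetherian.noetherian _)).isClosed
    exact this.preimage (by fun_prop : Continuous fun y : R => y ^ 2 + y - s)
  have hne : (⋂ n, {y : R | y ^ 2 + y - s ∈ maximalIdeal R ^ n}).Nonempty := by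
    apply IsCompact.nonempty_iInter_of_sequence_nonempty_isCompact_isClosed
    · intro n y hy
      exact Ideal.pow_le_pow_right (Nat.le_succ n) hy
    · intro n
      obtain ⟨y, hy⟩ := happ n
      refine ⟨y, ?_⟩
      simp only [Set.mem_ofPred_eq, hπ, Ideal.span_singleton_pow, Ideal.mem_span_singleton]
      exact (pow_dvd_pow _ (Nat.le_succ n)).trans hy
    · exact (hcl 0).isCompact
    · exact hcl
  obtain ⟨z, hz⟩ := hne
  refine ⟨z, ?_⟩
  have hz' : z ^ 2 + z - s ∈ (⨅ n, maximalIdeal R ^ n : Ideal R) := by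
    simpa [Ideal.mem_iInf] using hz
  rw [Ideal.iInf_pow_eq_bot_of_isLocalRing _ (maximalIdeal.isMaximal R).ne_top] at hz'
  exact sub_eq_zero.mp hz'

/-- index of Artin-Schreier image in a finite field of characteristic two -/
theorem RU_AS (k : Type*) [Field k] [Finite k] (h2 : (2 : k) = 0) (s u : k)
    (hs : ∀ y : k, y ^ 2 + y ≠ s) (hu : ∀ y : k, y ^ 2 + y ≠ u) : ∃ y : k, y ^ 2 + y = s + u := by
  classical
  let f : k →+ k :=
    { toFun := fun y => y ^ 2 + y
      map_zero' := by simp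
      map_add' := fun x y => by linear_combination (x * y) * h2 }
  have hcard : Nat.card f.ker = 2 := by
    have : (f.ker : Set k) = {0, 1} := by
      ext x
      simp only [SetLike.mem_coe, AddMonoidHom.mem_ker, Set.mem_insert_iff, Set.mem_singleton_iff]
      change x ^ 2 + x = 0 ↔ _
      constructor
      · intro h
        have : x * (x - 1) = 0 := by linear_combination h - x * h2
        rcases mul_eq_zero.mp this with h | h
        · exact Or.inl h
        · exact Or.inr (sub_eq_zero.mp h)
      · rintro (rfl | rfl)
        · simp
        · linear_combination h2
    change Nat.card (f.ker : Set k) = 2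
    rw [this]
    rw [Nat.card_coe_set_eq, Set.ncard_pair zero_ne_one]
  have hidx : f.range.index = 2 := by
    have h1 := f.range.card_mul_index
    have h2 := f.ker.card_mul_index
    rw [AddSubgroup.index_ker, hcard] at h2
    have hpos : 0 < Nat.card f.range := Nat.card_pos
    rw [← h2] at h1
    exact Nat.eq_of_mul_eq_mul_left hpos (by linarith)
  have := (AddSubgroup.add_mem_iff_of_index_two hidx (a := s) (b := u))
  have hs' : s ∉ f.range := fun ⟨y, hy⟩ => hs y hy
  have hu' : u ∉ f.range := fun ⟨y, hy⟩ => hu y hy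
  obtain ⟨y, hy⟩ := this.mpr (by tauto)
  exact ⟨y, hy⟩

theorem RU_units (R : Type*) [CommRing R] [IsLocalRing R] [IsDomain R]
    (π t τ u t0 : R) (hπ : maximalIdeal R = Ideal.span {π}) (m : ℕ)
    (hπ0 : π ≠ 0) (ht : t = π * τ) (ht2 : t ∣ 2) (hm : t * t0 = π ^ m) (hm' : π ^ m ∣ t)
    [Finite (ResidueField R)]
    (hens : ∀ s y : R, π ∣ y ^ 2 + y - s → ∃ z : R, z ^ 2 + z = s)
    (hu : ∀ c : R, ¬ π ∣ c ^ 2 - c - u) (e : R) (he : IsUnit e) :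
    ∃ x y x' y' : R, x ^ 2 + t * x * y + π * y ^ 2 ≠ 0 ∧
      (e * (x ^ 2 + t * x * y + π * y ^ 2) = x' ^ 2 + t * x' * y' + π * y' ^ 2 ∨
       e * (x ^ 2 + t * x * y + π * y ^ 2) * (1 + t * τ * u)
        = x' ^ 2 + t * x' * y' + π * y' ^ 2) := by
  have hres : ∀ x : R, residue R x = 0 ↔ π ∣ x := by
    intro x
    rw [residue_eq_zero_iff, hπ, Ideal.mem_span_singleton]
  have hπ2 : π ∣ 2 := (Dvd.intro τ ht.symm).trans ht2
  have h2k : (2 : ResidueField R) = 0 := by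
    have := (hres 2).mpr hπ2
    rwa [map_ofNat] at this
  have hπu : ¬ π ∣ 1 := by
    rw [← hres]; simp
  -- residues are squares
  have hsq : ∀ c : R, ∃ q : R, π ∣ c + q ^ 2 := by
    intro c
    have : CharP (ResidueField R) 2 := CharTwo.of_one_ne_zero_of_two_eq_zero one_ne_zero h2k
    have := Fintype.ofFinite (ResidueField R)
    obtain ⟨r, hr⟩ := (FiniteField.isSquare_of_char_two (ringChar.eq _ 2) (residue R c))
    obtain ⟨q, rfl⟩ := residue_surjective r
    refine ⟨q, (hres _).mp ?_⟩
    rw [map_add, map_pow, hr]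
    linear_combination (residue R q) ^ 2 * h2k
  -- first step and induction
  have hind : ∀ n : ℕ, n + 1 ≤ 2 * m - 1 → ∃ x y c : R,
      e * (x ^ 2 + t * x * y + π * y ^ 2) = 1 + π ^ (n + 1) * c := by
    intro n
    induction n with
    | zero =>
      intro _
      obtain ⟨e', he'⟩ := he.exists_right_inv
      obtain ⟨q, c, hq⟩ := hsq e'
      obtain ⟨k, hk⟩ := hπ2
      refine ⟨q, 0, e * c - k, ?_⟩
      linear_combination (-1 : R) * he' + e * hq - hk
    | succ n ih =>
      intro hn
      obtain ⟨x, y, c, hxy⟩ := ih (by omega)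
      obtain ⟨q, d, hq⟩ := hsq c
      rcases Nat.even_or_odd' (n + 1) with ⟨k, hk | hk⟩
      · -- multiply by the norm of 1 + π^k q
        have hdiv : π ^ (n + 1 + 1) ∣ 2 * π ^ k := by
          have : π ^ (n + 1 + 1) ∣ π ^ m * π ^ k := by
            rw [← pow_add]; exact pow_dvd_pow _ (by omega)
          exact this.trans (mul_dvd_mul_right (hm'.trans ht2) _)
        obtain ⟨g, hg⟩ := hdiv
        refine ⟨x * (1 + π ^ k * q), y * (1 + π ^ k * q),
          d + g * q + π ^ n * c * q ^ 2 + π ^ (n + 1) * c * g * q, ?_⟩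
        have hkk : (π ^ k) ^ 2 = π ^ (n + 1) := by rw [← pow_mul, hk]; ring_nf
        calc _ = (e * (x ^ 2 + t * x * y + π * y ^ 2)) *
              (1 + 2 * π ^ k * q + (π ^ k) ^ 2 * q ^ 2) := by ring
          _ = _ := by
              rw [hxy, hkk, hg]
              linear_combination π ^ (n + 1) * hq
      · have hdiv : π ^ (n + 1 + 1) ∣ t * π ^ k := by
          have : π ^ (n + 1 + 1) ∣ π ^ m * π ^ k := by
            rw [← pow_add]; exact pow_dvd_pow _ (by omega)
          exact this.trans (mul_dvd_mul_right hm' _)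
        obtain ⟨g, hg⟩ := hdiv
        refine ⟨x - π * y * (π ^ k * q), x * (π ^ k * q) + y + y * (π ^ k * q) * t,
          d + g * q + π ^ n * c * q ^ 2 + π ^ (n + 1) * c * g * q, ?_⟩
        have hkk : π * (π ^ k) ^ 2 = π ^ (n + 1) := by
          rw [← pow_mul, hk]; ring_nf
        calc _ = (e * (x ^ 2 + t * x * y + π * y ^ 2)) *
              (1 + t * π ^ k * q + π * (π ^ k) ^ 2 * q ^ 2) := by ring
          _ = _ := by
              rw [hxy, hkk, hg]
              linear_combination π ^ (n + 1) * hq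
  have hm1 : 1 ≤ m := by
    by_contra h
    have : m = 0 := by omega
    subst this
    exact hπu ⟨τ * t0, by rw [← mul_assoc, ← ht, hm]; simp⟩
  obtain ⟨x, y, c, hxy⟩ := hind (2 * m - 2) (by omega)
  have hpow : π ^ (2 * m - 2 + 1) = t * τ * t0 ^ 2 := by
    apply mul_left_cancel₀ hπ0
    have : π * π ^ (2 * m - 2 + 1) = (π ^ m) ^ 2 := by
      rw [← pow_succ', ← pow_mul]; congr 1; omega
    rw [this, ← hm]
    nth_rewrite 1 [ht]
    rw [ht]; ring
  rw [hpow] at hxy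
  -- norm elements from Artin-Schreier solutions
  have hAS : ∀ s z : R, π ∣ z ^ 2 + z - s → ∃ z : R,
      1 + t * τ * s = 1 ^ 2 + t * 1 * (τ * z) + π * (τ * z) ^ 2 := by
    intro s z hz
    obtain ⟨w, hw⟩ := hens s z hz
    refine ⟨w, ?_⟩
    rw [← hw, ht]; ring
  have hlift : ∀ s : R, (∃ r : ResidueField R, r ^ 2 + r = residue R s) →
      ∃ z : R, π ∣ z ^ 2 + z - s := by
    rintro s ⟨r, hr⟩
    obtain ⟨z, rfl⟩ := residue_surjective r
    refine ⟨z, (hres _).mp ?_⟩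
    simp [hr]
  refine ⟨x, y, ?_⟩
  have hne : x ^ 2 + t * x * y + π * y ^ 2 ≠ 0 := by
    intro h
    rw [h] at hxy
    apply hπu
    refine ⟨- (τ * τ * t0 ^ 2 * c), ?_⟩
    rw [ht] at hxy
    linear_combination - hxy
  set s := t0 ^ 2 * c with hs
  have hxy' : e * (x ^ 2 + t * x * y + π * y ^ 2) = 1 + t * τ * s := by
    rw [hxy, hs]; ring
  rw [hxy']
  by_cases hcs : ∃ r : ResidueField R, r ^ 2 + r = residue R s
  · obtain ⟨z, hz⟩ := hlift s hcs
    obtain ⟨w, hw⟩ := hAS s z hz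
    exact ⟨1, τ * w, hne, Or.inl hw⟩
  · have hcu : ∀ r : ResidueField R, r ^ 2 + r ≠ residue R u := by
      intro r hr
      obtain ⟨z, hz⟩ := hlift u ⟨r, hr⟩
      exact hu (-z) (by simpa using hz)
    have hsum := RU_AS _ h2k (residue R s) (residue R u) (by simpa using hcs) hcu
    have hrt : residue R t = 0 := (hres t).mpr ⟨τ, ht⟩
    obtain ⟨z, hz⟩ := hlift (s + u + t * τ * s * u) (by simpa [hrt] using hsum)
    obtain ⟨w, hw⟩ := hAS _ z hz
    exact ⟨1, τ * w, hne, Or.inr (by rw [← hw]; ring)⟩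

end RUhelpers

theorem RU_quat (F B : Type*) [Field F] [DivisionRing B] [Algebra F B]
    (hdim : Module.finrank F B = 4) (hcenter : Subalgebra.center F B = ⊥) (h2 : (2 : F) ≠ 0)
    (a : F) (ha : ∀ c : F, c ^ 2 ≠ a) (ϑ : B) (hϑ : ϑ ^ 2 = algebraMap F B a) :
    ∃ (j : B) (d : F), d ≠ 0 ∧ ϑ * j = - (j * ϑ) ∧ j ^ 2 = algebraMap F B d := by
  have hinj : Function.Injective (algebraMap F B) := (algebraMap F B).injective
  have hϑF : ∀ c : F, ϑ ≠ algebraMap F B c := by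
    rintro c rfl
    exact ha c (hinj (by rw [map_pow, hϑ]))
  have h2B : (2 : B) ≠ 0 := by
    intro h
    exact h2 (hinj (by rw [map_ofNat, h, map_zero]))
  have hϑ0 : ϑ ≠ 0 := by simpa using hϑF 0
  have hex : ∃ x : B, x * ϑ ≠ ϑ * x := by
    by_contra! h
    have : ϑ ∈ Subalgebra.center F B := by
      rw [Subalgebra.mem_center_iff]; exact h
    rw [hcenter, Algebra.mem_bot] at this
    obtain ⟨c, hc⟩ := this
    exact hϑF c hc.symm
  obtain ⟨x, hx⟩ := hex
  have hca : ∀ z : B, ϑ * ϑ * z = z * (ϑ * ϑ) := by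
    intro z
    rw [← sq, hϑ]; exact Algebra.commutes a z
  obtain ⟨j, hj⟩ : ∃ j, j = x * ϑ - ϑ * x := ⟨_, rfl⟩
  have hj0 : j ≠ 0 := by rw [hj]; exact sub_ne_zero.mpr hx
  have hanti : ϑ * j = - (j * ϑ) := by
    have := hca x
    rw [hj, mul_sub, sub_mul, ← mul_assoc ϑ ϑ x, this]
    simp only [mul_assoc]; abel
  have hanti' : j * ϑ = - (ϑ * j) := by rw [hanti, neg_neg]
  -- x + y ϑ = 0 forces x = y = 0
  have hind2 : ∀ p q : F, algebraMap F B p + algebraMap F B q * ϑ = 0 → p = 0 ∧ q = 0 := by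
    intro p q h
    by_cases hq : q = 0
    · subst hq
      simp only [map_zero, zero_mul, add_zero] at h
      exact ⟨hinj (by rw [h, map_zero]), rfl⟩
    · exfalso
      apply hϑF (- p / q)
      have hq' : algebraMap F B q ≠ 0 := fun h => hq (hinj (by rw [h, map_zero]))
      apply mul_left_cancel₀ hq'
      rw [← map_mul, mul_div_cancel₀ _ hq, map_neg]
      exact (neg_eq_of_add_eq_zero_right h).symm
  have hli : LinearIndependent F ![1, ϑ, j, ϑ * j] := by
    rw [Fintype.linearIndependent_iff]
    intro g hg
    simp only [Fin.sum_univ_four, Matrix.cons_val, Algebra.smul_def, mul_one] at hg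
    set p := algebraMap F B (g 0) with hp
    set q := algebraMap F B (g 1) with hq
    set r := algebraMap F B (g 2) with hr
    set s := algebraMap F B (g 3) with hs
    have cp : ϑ * p = p * ϑ := (Algebra.commutes _ _).symm
    have cq : ϑ * q = q * ϑ := (Algebra.commutes _ _).symm
    have cr : ϑ * r = r * ϑ := (Algebra.commutes _ _).symm
    have cs : ϑ * s = s * ϑ := (Algebra.commutes _ _).symm
    have e1 : ϑ * ((p + q * ϑ) + (r + s * ϑ) * j) = 0 := by
      rw [show (p + q * ϑ) + (r + s * ϑ) * j = p + q * ϑ + r * j + s * (ϑ * j) by noncomm_ring,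
        hg, mul_zero]
    have e2 : ((p + q * ϑ) + (r + s * ϑ) * j) * ϑ = 0 := by
      rw [show (p + q * ϑ) + (r + s * ϑ) * j = p + q * ϑ + r * j + s * (ϑ * j) by noncomm_ring,
        hg, zero_mul]
    have c1 : ϑ * (p + q * ϑ) = (p + q * ϑ) * ϑ := by
      rw [mul_add, add_mul, cp, ← mul_assoc, cq]
    have c2 : ϑ * (r + s * ϑ) = (r + s * ϑ) * ϑ := by
      rw [mul_add, add_mul, cr, ← mul_assoc, cs]
    have e1' : (p + q * ϑ) * ϑ - (r + s * ϑ) * j * ϑ = 0 := by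
      rw [mul_add, c1, ← mul_assoc, c2, mul_assoc _ ϑ j, hanti, mul_neg, ← mul_assoc] at e1
      rw [← e1]; abel
    have e3 : 2 * ((p + q * ϑ) * ϑ) = 0 := by
      rw [add_mul] at e2
      calc _ = ((p + q * ϑ) * ϑ - (r + s * ϑ) * j * ϑ)
            + ((p + q * ϑ) * ϑ + (r + s * ϑ) * j * ϑ) := by noncomm_ring
        _ = 0 := by rw [e1', e2, add_zero]
    have f1 : p + q * ϑ = 0 := by
      rcases mul_eq_zero.mp e3 with h | h
      · exact absurd h h2B
      · exact (mul_eq_zero.mp h).resolve_right hϑ0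
    have f2 : r + s * ϑ = 0 := by
      rw [f1, zero_add] at e2
      exact (mul_eq_zero.mp ((mul_eq_zero.mp e2).resolve_right hϑ0)).resolve_right hj0
    obtain ⟨g0, g1⟩ := hind2 _ _ f1
    obtain ⟨g2, g3⟩ := hind2 _ _ f2
    intro i
    fin_cases i
    · exact g0
    · exact g1
    · exact g2
    · exact g3
  have hspan := hli.span_eq_top_of_card_eq_finrank (by simp [hdim])
  have hjj : ϑ * (j * j) = j * j * ϑ := by
    rw [← mul_assoc, hanti, neg_mul, mul_assoc, hanti, mul_neg, neg_neg, mul_assoc]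
  have hcen : j ^ 2 ∈ Subalgebra.center F B := by
    rw [Subalgebra.mem_center_iff]
    intro z
    have hz : z ∈ Submodule.span F (Set.range ![1, ϑ, j, ϑ * j]) := by rw [hspan]; trivial
    rw [sq]
    induction hz using Submodule.span_induction with
    | mem z hz =>
      obtain ⟨i, rfl⟩ := hz
      fin_cases i
      · simp
      · exact hjj
      · exact (mul_assoc _ _ _).symm
      · change ϑ * j * (j * j) = j * j * (ϑ * j)
        rw [← mul_assoc (j * j), ← hjj]; simp only [mul_assoc]
    | zero => simp
    | add x y _ _ hx hy => rw [add_mul, mul_add, hx, hy]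
    | smul c x _ hx => rw [smul_mul_assoc, mul_smul_comm, hx]
  rw [hcenter, Algebra.mem_bot] at hcen
  obtain ⟨d, hd⟩ := hcen
  refine ⟨j, d, ?_, hanti, hd.symm⟩
  rintro rfl
  rw [map_zero] at hd
  exact hj0 (pow_eq_zero_iff two_ne_zero |>.mp hd.symm)

theorem RU_twist (F B : Type*) [Field F] [DivisionRing B] [Algebra F B]
    (a : F) (ϑ : B) (hϑ : ϑ ^ 2 = algebraMap F B a) (j : B) (d : F) (hd : d ≠ 0)
    (hanti : ϑ * j = - (j * ϑ)) (hj : j ^ 2 = algebraMap F B d) (c x y : F)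
    (h : d = c * (x ^ 2 - a * y ^ 2)) :
    ∃ ϑ' : B, ϑ * ϑ' = - (ϑ' * ϑ) ∧ ϑ' ^ 2 = algebraMap F B c := by
  have hN : x ^ 2 - a * y ^ 2 ≠ 0 := by
    intro h0; exact hd (by rw [h, h0, mul_zero])
  set N := x ^ 2 - a * y ^ 2 with hNdef
  set X := algebraMap F B x with hX
  set Y := algebraMap F B y with hY
  have cX : ∀ z : B, z * X = X * z := fun z => (Algebra.commutes _ _).symm
  have cY : ∀ z : B, z * Y = Y * z := fun z => (Algebra.commutes _ _).symm
  have cN : ∀ z : B, z * algebraMap F B N⁻¹ = algebraMap F B N⁻¹ * z :=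
    fun z => (Algebra.commutes _ _).symm
  have hc : ϑ * (X - Y * ϑ) = (X - Y * ϑ) * ϑ := by
    rw [mul_sub, sub_mul, cX, ← mul_assoc, cY]
  have hjz : j * (X - Y * ϑ) = (X + Y * ϑ) * j := by
    rw [mul_sub, add_mul, cX, ← mul_assoc, cY, mul_assoc, mul_assoc, hanti, mul_neg]; abel
  have hNN : (X - Y * ϑ) * (X + Y * ϑ) = algebraMap F B N := by
    have : (X - Y * ϑ) * (X + Y * ϑ) = X ^ 2 - ϑ ^ 2 * Y ^ 2 := by
      have e1 : X * (Y * ϑ) = Y * ϑ * X := (cX _).symm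
      have e2 : Y * ϑ * (Y * ϑ) = ϑ ^ 2 * Y ^ 2 := by
        rw [← cY ϑ, sq, sq]
        rw [mul_assoc, ← mul_assoc Y ϑ Y, ← cY ϑ]; simp only [mul_assoc]
      rw [sub_mul, mul_add, mul_add, e1, e2, sq X]; abel
    rw [this, hϑ, hNdef]; simp [hX, hY]
  refine ⟨algebraMap F B N⁻¹ * ((X - Y * ϑ) * j), ?_, ?_⟩
  · rw [← mul_assoc ϑ, cN ϑ, mul_assoc, mul_assoc _ _ ϑ, ← mul_assoc ϑ, hc, mul_assoc _ ϑ j, hanti]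
    simp only [mul_neg, mul_assoc]
  · have : ((X - Y * ϑ) * j) ^ 2 = algebraMap F B (N * d) := by
      rw [sq, mul_assoc, ← mul_assoc j, hjz, mul_assoc _ j j, ← mul_assoc, hNN, ← sq, hj, map_mul]
    rw [(Algebra.commute_algebraMap_left N⁻¹ ((X - Y * ϑ) * j)).mul_pow, this, ← map_pow, ← map_mul]
    congr 1
    rw [h]; field_simp

theorem RU_gamma (F B : Type*) [Field F] [DivisionRing B] [Algebra F B] (h2 : (2 : F) ≠ 0)
    (a b u : F) (hab : (1 - a) * (1 - b) = - (4 * u)) (ϑ ϑ' : B)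
    (hϑ : ϑ ^ 2 = algebraMap F B a) (hϑ' : ϑ' ^ 2 = algebraMap F B b)
    (hanti : ϑ * ϑ' = - (ϑ' * ϑ)) :
    ((2 : B)⁻¹ * (1 + ϑ + ϑ' + ϑ * ϑ')) ^ 2 - (2 : B)⁻¹ * (1 + ϑ + ϑ' + ϑ * ϑ')
        = algebraMap F B u := by
  have hinj : Function.Injective (algebraMap F B) := (algebraMap F B).injective
  have h2B : (2 : B) ≠ 0 := by
    intro h
    exact h2 (hinj (by rw [map_ofNat, h, map_zero]))
  set v := ϑ + ϑ' + ϑ * ϑ' with hv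
  have hanti' : ϑ' * ϑ = - (ϑ * ϑ') := by rw [hanti, neg_neg]
  have hϑϑ : ϑ * ϑ = algebraMap F B a := by rw [← sq, hϑ]
  have hϑϑ' : ϑ' * ϑ' = algebraMap F B b := by rw [← sq, hϑ']
  have k1 : ϑ' * (ϑ * ϑ') = - (ϑ * (ϑ' * ϑ')) := by
    rw [← mul_assoc, hanti', neg_mul, mul_assoc]
  have k2 : ϑ * ϑ' * ϑ = - (ϑ * (ϑ * ϑ')) := by
    rw [mul_assoc, hanti', mul_neg]
  have k3 : ϑ * ϑ' * (ϑ * ϑ') = - (ϑ * ϑ * (ϑ' * ϑ')) := by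
    rw [mul_assoc, k1, mul_neg, ← mul_assoc]
  have k4 : ϑ * ϑ' * ϑ' = ϑ * (ϑ' * ϑ') := mul_assoc _ _ _
  have hvv : v * v = algebraMap F B (1 + 4 * u) := by
    have : v * v = ϑ * ϑ + ϑ' * ϑ' - ϑ * ϑ * (ϑ' * ϑ') := by
      rw [hv]
      simp only [mul_add, add_mul]
      rw [k1, k2, k3, k4, hanti']
      abel
    rw [this, hϑϑ, hϑϑ', ← map_mul, ← map_add, ← map_sub]
    congr 1
    linear_combination - hab
  have hs : 1 + ϑ + ϑ' + ϑ * ϑ' = 1 + v := by rw [hv]; abel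
  rw [hs]
  have c2 : ∀ z : B, z * (2 : B)⁻¹ = (2 : B)⁻¹ * z := fun z =>
    ((Commute.ofNat_right z 2).inv_right₀).eq
  have : ((2 : B)⁻¹ * (1 + v)) ^ 2 - (2 : B)⁻¹ * (1 + v)
      = (2 : B)⁻¹ * (2 : B)⁻¹ * (v * v - 1) := by
    have e : (2 : B)⁻¹ * (1 + v) = (2 : B)⁻¹ * (2 : B)⁻¹ * (2 * (1 + v)) := by
      rw [mul_assoc, ← mul_assoc _ 2, inv_mul_cancel₀ h2B, one_mul]
    have e' : ((2 : B)⁻¹ * (1 + v)) ^ 2 = (2 : B)⁻¹ * (2 : B)⁻¹ * ((1 + v) * (1 + v)) := by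
      rw [sq, mul_assoc, ← mul_assoc _ (2 : B)⁻¹, c2 (1 + v)]; simp only [mul_assoc]
    rw [e', e, ← mul_sub]
    congr 1
    noncomm_ring
  rw [this, hvv]
  have h4 : (2 : B)⁻¹ = algebraMap F B (2⁻¹) := by rw [map_inv₀, map_ofNat]
  rw [h4, ← map_mul, ← map_one (algebraMap F B), ← map_sub, ← map_mul]
  congr 1
  field_simp
  ring

theorem RU_field (F : Type*) [Field F] (h2 : (2 : F) ≠ 0) (p t b e : F) (ht : t ≠ 0) (hb : b ≠ 0)
    (s : F) (hs : s ≠ 0) (k : ℕ) (x y x' y' : F)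
    (hN : x ^ 2 + t * x * y + p * y ^ 2 ≠ 0)
    (h : e * (x ^ 2 + t * x * y + p * y ^ 2) = x' ^ 2 + t * x' * y' + p * y' ^ 2 ∨
       e * (x ^ 2 + t * x * y + p * y ^ 2) * b = x' ^ 2 + t * x' * y' + p * y' ^ 2)
    (d : F) (hd : d * s ^ 2 = p ^ k * e) :
    ∃ X Y : F, d = 1 * (X ^ 2 - (1 - 4 * p / t ^ 2) * Y ^ 2) ∨
      d = b * (X ^ 2 - (1 - 4 * p / t ^ 2) * Y ^ 2) := by
  let S : F → Prop := fun c => ∃ x y : F, c = x ^ 2 + t * x * y + p * y ^ 2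
  have hmul : ∀ c c', S c → S c' → S (c * c') := by
    rintro c c' ⟨x, y, rfl⟩ ⟨x', y', rfl⟩
    exact ⟨x * x' - p * y * y', x * y' + x' * y + t * y * y', by ring⟩
  have hsq : ∀ c, S (c ^ 2) := fun c => ⟨c, 0, by ring⟩
  have hinv : ∀ c, S c → S c⁻¹ := by
    intro c hc
    by_cases h0 : c = 0
    · subst h0; simpa using hc
    · have := hmul _ _ hc (hsq c⁻¹)
      convert this using 1
      field_simp
  have hp : S p := ⟨0, 1, by ring⟩
  have hpk' : ∀ k : ℕ, S (p ^ k) := by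
    intro k
    induction k with
    | zero => exact ⟨1, 0, by simp⟩
    | succ k ih => rw [pow_succ]; exact hmul _ _ ih hp
  have hpk := hpk' k
  have hconv : ∀ c, S c → ∃ X Y : F, c = X ^ 2 - (1 - 4 * p / t ^ 2) * Y ^ 2 := by
    rintro c ⟨x, y, rfl⟩
    refine ⟨x + t * y / 2, t * y / 2, ?_⟩
    field_simp
    ring
  have hd' : d = p ^ k * e * (s⁻¹) ^ 2 := by
    rw [← hd]; field_simp
  have hNS : S (x ^ 2 + t * x * y + p * y ^ 2) := ⟨x, y, rfl⟩
  have hNS' : S (x' ^ 2 + t * x' * y' + p * y' ^ 2) := ⟨x', y', rfl⟩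
  generalize x ^ 2 + t * x * y + p * y ^ 2 = n at *
  generalize x' ^ 2 + t * x' * y' + p * y' ^ 2 = n' at *
  rcases h with h | h
  · have he : S e := by
      have := hmul _ _ hNS' (hinv _ hNS)
      convert this using 1
      rw [← h]; field_simp
    obtain ⟨X, Y, hXY⟩ := hconv _ (hmul _ _ (hmul _ _ hpk he) (hsq s⁻¹))
    exact ⟨X, Y, Or.inl (by rw [hd', hXY, one_mul])⟩
  · have he : S (e * b) := by
      have := hmul _ _ hNS' (hinv _ hNS)
      convert this using 1
      rw [← h]; field_simp
    obtain ⟨X, Y, hXY⟩ := hconv _ (hmul _ _ (hmul _ _ (hmul _ _ hpk he) (hsq s⁻¹)) (hsq b⁻¹))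
    exact ⟨X, Y, Or.inr (by rw [hd', ← hXY]; field_simp)⟩

/-- **Anticommuting (R-U) generators in the quaternion algebra.**
Let `t, π₀ ∈ O_F` with `π₀` a uniformizer, `π₀ ∣ t` and `t ∣ 2` (the data of an (R-U)
extension), let `B` be a quaternion division algebra over `F`, and let `ϑ ∈ B` satisfy
`ϑ² = (1 − 4π₀/t²)·1` (a unit of `O_F`).  Let `u ∈ O_F^×` be a unit such that
`X² − X − u` has no root modulo `π₀`.  Then there exists `ϑ̃ ∈ B` with `ϑ·ϑ̃ = −ϑ̃·ϑ` and
`ϑ̃² = (1 + (t²/π₀)·u)·1`; moreover, for any such `ϑ̃` the element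
`γ = (1 + ϑ + ϑ̃ + ϑ·ϑ̃)/2 ∈ B` satisfies `γ² − γ = u·1`. -/
theorem exists_anticommuting_RU_generator_quaternion
    (F : Type*) [Field F] [Algebra ℚ_[2] F] [FiniteDimensional ℚ_[2] F]
    [Algebra ℤ_[2] F] [IsScalarTower ℤ_[2] ℚ_[2] F]
    [IsLocalRing (integralClosure ℤ_[2] F)]
    (π₀ t : integralClosure ℤ_[2] F)
    (hπ₀ : IsLocalRing.maximalIdeal (integralClosure ℤ_[2] F) = Ideal.span {π₀})
    (hπt : π₀ ∣ t) (ht2 : t ∣ 2)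
    (B : Type*) [DivisionRing B] [Algebra F B]
    (hdim : Module.finrank F B = 4)
    (hcenter : Subalgebra.center F B = ⊥)
    (ϑ : B) (hϑ : ϑ ^ 2 = algebraMap F B (1 - 4 * (π₀ : F) / (t : F) ^ 2))
    (u : integralClosure ℤ_[2] F) (hu : IsUnit u)
    (hnoroot : ∀ c : integralClosure ℤ_[2] F, ¬ (π₀ ∣ (c ^ 2 - c - u))) :
    (∃ ϑ' : B, ϑ * ϑ' = - (ϑ' * ϑ) ∧
        ϑ' ^ 2 = algebraMap F B (1 + (t : F) ^ 2 / (π₀ : F) * (u : F))) ∧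
    ∀ ϑ' : B, ϑ * ϑ' = - (ϑ' * ϑ) →
      ϑ' ^ 2 = algebraMap F B (1 + (t : F) ^ 2 / (π₀ : F) * (u : F)) →
      ((2 : B)⁻¹ * (1 + ϑ + ϑ' + ϑ * ϑ')) ^ 2 - (2 : B)⁻¹ * (1 + ϑ + ϑ' + ϑ * ϑ')
        = algebraMap F B (u : F) := by
  have hinjQ : Function.Injective (algebraMap ℚ_[2] F) := (algebraMap ℚ_[2] F).injective
  have h2 : (2 : F) ≠ 0 := by
    intro h
    exact two_ne_zero (α := ℚ_[2]) (hinjQ (by rw [map_ofNat, h, map_zero]))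
  have : CharZero F := charZero_of_injective_algebraMap hinjQ
  have : IsFractionRing (integralClosure ℤ_[2] F) F :=
    IsIntegralClosure.isFractionRing_of_finite_extension ℤ_[2] ℚ_[2] F _
  have : IsNoetherianRing (integralClosure ℤ_[2] F) :=
    IsIntegralClosure.isNoetherianRing ℤ_[2] ℚ_[2] F _
  have : Module.Finite ℤ_[2] (integralClosure ℤ_[2] F) :=
    IsIntegralClosure.finite ℤ_[2] ℚ_[2] F _
  have hinjZ : Function.Injective (algebraMap ℤ_[2] F) := by
    rw [IsScalarTower.algebraMap_eq ℤ_[2] ℚ_[2] F]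
    exact hinjQ.comp (IsFractionRing.injective ℤ_[2] ℚ_[2])
  have : FaithfulSMul ℤ_[2] F := (faithfulSMul_iff_algebraMap_injective _ _).mpr hinjZ
  have : Module.Free ℤ_[2] (integralClosure ℤ_[2] F) :=
    IsIntegralClosure.module_free ℤ_[2] ℚ_[2] F _
  have hcoe0 : ∀ x : integralClosure ℤ_[2] F, (x : F) = 0 → x = 0 := fun x hx => Subtype.ext hx
  have h2R : (2 : integralClosure ℤ_[2] F) ≠ 0 := by
    intro h
    exact h2 (congrArg (Subtype.val) h)
  have ht0 : t ≠ 0 := by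
    rintro rfl
    exact h2R (zero_dvd_iff.mp ht2)
  have hp0 : π₀ ≠ 0 := by
    rintro rfl
    exact ht0 (zero_dvd_iff.mp hπt)
  have htF : (t : F) ≠ 0 := fun h => ht0 (hcoe0 _ h)
  have hpF : (π₀ : F) ≠ 0 := fun h => hp0 (hcoe0 _ h)
  have hdvr : IsDiscreteValuationRing (integralClosure ℤ_[2] F) := by
    have hnf : ¬ IsField (integralClosure ℤ_[2] F) := by
      rw [IsLocalRing.isField_iff_maximalIdeal_eq, hπ₀, Ideal.span_singleton_eq_bot]
      exact hp0
    have hpr : (IsLocalRing.maximalIdeal (integralClosure ℤ_[2] F)).IsPrincipal := ⟨⟨π₀, hπ₀⟩⟩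
    exact ((IsDiscreteValuationRing.TFAE (integralClosure ℤ_[2] F) hnf).out 4 0).mp hpr
  have hirr : Irreducible π₀ := (IsDiscreteValuationRing.irreducible_iff_uniformizer π₀).mpr hπ₀
  obtain ⟨hfin, hens⟩ := RU_compact (integralClosure ℤ_[2] F) π₀ hπ₀ (hπt.trans ht2)
  obtain ⟨τ, hτ⟩ := hπt
  obtain ⟨m, vt, hm⟩ := IsDiscreteValuationRing.eq_unit_mul_pow_irreducible ht0 hirr
  have hτF : (t : F) = (π₀ : F) * (τ : F) := by rw [hτ]; rfl
  have hbF : 1 + (t : F) ^ 2 / (π₀ : F) * (u : F) = 1 + (t : F) * (τ : F) * (u : F) := by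
    rw [hτF]; field_simp
  have hab : (1 - (1 - 4 * (π₀ : F) / (t : F) ^ 2)) * (1 - (1 + (t : F) ^ 2 / (π₀ : F) * (u : F)))
      = - (4 * (u : F)) := by
    field_simp
    ring
  have hb0 : 1 + (t : F) ^ 2 / (π₀ : F) * (u : F) ≠ 0 := by
    rw [hbF]
    intro h
    have h' : 1 + t * τ * u = 0 := hcoe0 _ (by simpa using h)
    apply hirr.not_isUnit
    rw [isUnit_iff_dvd_one]
    refine ⟨- (τ * τ * u), ?_⟩
    rw [hτ] at h'
    linear_combination h'
  have hnsq : ∀ c : F, c ^ 2 ≠ 1 - 4 * (π₀ : F) / (t : F) ^ 2 := by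
    intro c hc
    obtain ⟨w, hw⟩ : ∃ w : F, w = (t : F) * (1 - c) / 2 := ⟨_, rfl⟩
    have hweq : w ^ 2 - (t : F) * w + (π₀ : F) = 0 := by
      have hc' : c ^ 2 * (t : F) ^ 2 = (t : F) ^ 2 - 4 * (π₀ : F) := by
        rw [hc]; field_simp
      rw [hw]
      field_simp
      linear_combination hc'
    have hwint : IsIntegral (integralClosure ℤ_[2] F) w := by
      refine ⟨Polynomial.X ^ 2 - Polynomial.C t * Polynomial.X + Polynomial.C π₀, ?_, ?_⟩
      · monicity!
      · simpa using hweq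
    obtain ⟨w', hw'⟩ := IsIntegrallyClosed.isIntegral_iff.mp hwint
    have hwR : w' ^ 2 - t * w' + π₀ = 0 := by
      apply hcoe0
      rw [← hw'] at hweq
      exact hweq
    have hdw : π₀ ∣ w' := by
      apply hirr.prime.dvd_of_dvd_pow (n := 2)
      refine ⟨τ * w' - 1, ?_⟩
      rw [hτ] at hwR
      linear_combination hwR
    obtain ⟨g, hg⟩ := hdw
    apply hirr.not_isUnit
    rw [isUnit_iff_dvd_one]
    refine ⟨τ * g - g ^ 2, mul_left_cancel₀ hp0 ?_⟩
    rw [hτ, hg] at hwR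
    linear_combination hwR
  refine ⟨?_, fun ϑ' h1 h2' => RU_gamma F B h2 _ _ _ hab ϑ ϑ' hϑ h2' h1⟩
  obtain ⟨j, d, hd0, hanti, hj⟩ := RU_quat F B hdim hcenter h2 _ hnsq ϑ hϑ
  obtain ⟨r, s, hs, hrs⟩ := IsFractionRing.div_surjective (A := integralClosure ℤ_[2] F) d
  have hs0 : s ≠ 0 := nonZeroDivisors.ne_zero hs
  have hsF : (s : F) ≠ 0 := fun h => hs0 (hcoe0 _ h)
  have hrs' : d * (s : F) = (r : F) := by
    rw [← hrs]
    exact div_mul_cancel₀ _ hsF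
  have hr0 : r ≠ 0 := by
    rintro rfl
    exact mul_ne_zero hd0 hsF (by rw [hrs']; rfl)
  obtain ⟨k, v, hk⟩ := IsDiscreteValuationRing.eq_unit_mul_pow_irreducible
    (mul_ne_zero hr0 hs0) hirr
  have hdk : d * (s : F) ^ 2 = (π₀ : F) ^ k * ((v : integralClosure ℤ_[2] F) : F) := by
    have : (r : F) * (s : F) = ((v : integralClosure ℤ_[2] F) : F) * (π₀ : F) ^ k :=
      congrArg Subtype.val hk
    rw [mul_comm _ ((v : integralClosure ℤ_[2] F) : F), ← this, ← hrs']; ring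
  obtain ⟨x, y, x', y', hN, hor⟩ := RU_units (integralClosure ℤ_[2] F) π₀ t τ u
    ((vt⁻¹ : (integralClosure ℤ_[2] F)ˣ) : integralClosure ℤ_[2] F) hπ₀ m hp0 hτ ht2
    (by rw [hm, mul_comm, ← mul_assoc, Units.inv_mul, one_mul]) ⟨vt, by rw [hm, mul_comm]⟩
    hens hnoroot v v.isUnit
  obtain ⟨X, Y, hXY⟩ := RU_field F h2 (π₀ : F) (t : F) (1 + (t : F) ^ 2 / (π₀ : F) * (u : F))
    ((v : integralClosure ℤ_[2] F) : F) htF hb0 (s : F) hsF k (x : F) (y : F) (x' : F) (y' : F)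
    (fun h => hN (hcoe0 _ h))
    (by
      rw [hbF]
      exact hor.imp (fun h => congrArg Subtype.val h) (fun h => congrArg Subtype.val h)) d hdk
  rcases hXY with hXY | hXY
  · -- impossible case: the algebra would split
    exfalso
    obtain ⟨i, hi1, hi2⟩ := RU_twist F B _ ϑ hϑ j d hd0 hanti hj 1 X Y hXY
    rw [map_one, sq_eq_one_iff] at hi2
    have hϑ0 : ϑ = - ϑ := by
      rcases hi2 with rfl | rfl
      · simpa using hi1
      · simpa using hi1.symm
    have hadd : (2 : B) * ϑ = 0 := by
      rw [two_mul]; nth_rewrite 1 [hϑ0]; exact neg_add_cancel ϑ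
    have h2B : (2 : B) ≠ 0 := by
      intro h
      exact h2 ((algebraMap F B).injective (by rw [map_ofNat, h, map_zero]))
    have hz : ϑ = 0 := (mul_eq_zero.mp hadd).resolve_left h2B
    apply hnsq 0
    apply (algebraMap F B).injective
    rw [← hϑ, hz]; simp
  · exact RU_twist F B _ ϑ hϑ j d hd0 hanti hj _ X Y hXY
end
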